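/- Fix real k₁ > 0 and k₂ > 0, and set ρ = k₁ + 2k₂ and k = k₁ + k₂. For λ ≥ 0 and t ≥ 0 define I(λ, t) = ∫₀¹ ∫₀^π (cosh²t + 2 r cos φ sinh t cosh t + r² sinh²t)^((λ−ρ)/2) (1−r²)^(k₁−1) r^(2k₂) (sin φ)^(2k₂−1) dφ dr. Then there exist constants C₁, C₂ > 0 depending only on k₁ and k₂ such that for all λ ≥ 0 and t ≥ 0, C₁ B ≤ I(λ, t) ≤ C₂ B, where B = e^((λ−ρ)t) · (1+t)/(1+λt)^k · ((1+λ(1+t))/(1+λ))^(k−1). -/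

import Mathlib

open MeasureTheory Real

/-- Koornwinder's integral representation (up to a constant) of the
Heckman–Opdam hypergeometric function for the root system `BC₁`. -/
noncomputable def bcIntegral (k₁ k₂ l t : ℝ) : ℝ :=
  ∫ r in (0:ℝ)..1, ∫ φ in (0:ℝ)..Real.pi,
    (Real.cosh t ^ 2 + 2 * r * Real.cos φ * Real.sinh t * Real.cosh t +
        r ^ 2 * Real.sinh t ^ 2) ^ ((l - (k₁ + 2 * k₂)) / 2) *
      (1 - r ^ 2) ^ (k₁ - 1) * r ^ (2 * k₂) * Real.sin φ ^ (2 * k₂ - 1)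

/-!
Put `a = 1 - r` and `τ = exp (-t) * sinh t ∈ [0, 1/2)`. The base of Koornwinder's integrand is
`exp (2 * t)` times a quantity in `(0, 1]`, which equals `1` at `a = 0`, `φ = 0` and degenerates to
`exp (-4 * t)` at the antipodal point `a = 0`, `φ = π`. Write `ρ = k₁ + 2 * k₂`.

* If `l ≥ ρ`, the half `φ ≤ π / 2` dominates. There the base is `exp (-τ * (a + φ ^ 2))` up to
  constants in the exponent, and Laplace's method against `a ^ (k₁ - 1) * φ ^ (2 * k₂ - 1)` gives
  `(1 + l * τ) ^ (-(k₁ + k₂))`.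
* If `l ≤ ρ`, the half `φ ≥ π / 2` dominates. There the base is `(exp (-2 * t) + a + (π - φ)) ^ 2`
  up to constants, so the integral is comparable to
  `∫ a in exp (-2 * t)..1, a ^ (l - 1) ≈ (1 + t) / (1 + l * t)`.

For the lower bound the second regime matters only when `l` is small and `t` is large: the base
without its factor `exp (2 * t)` is at most `1`, so its powers decrease in `l`, and the Laplace
lower bound at a larger exponent covers all other `l` and `t`.
-/

namespace HeckmanOpdam

open Set
open scoped ENNReal NNReal

section Comparison

theorem rpow_le_rpow_abs_mul_rpow {C x y : ℝ} (hx : 0 < x) (hy : 0 < y) (hxy : x ≤ C * y)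
    (hyx : y ≤ C * x) (m : ℝ) : x ^ m ≤ C ^ |m| * y ^ m := by
  have hC : 0 < C := pos_of_mul_pos_left (hy.trans_le hyx) hx.le
  rcases le_total 0 m with hm | hm
  · rw [abs_of_nonneg hm, ← mul_rpow hC.le hy.le]
    exact rpow_le_rpow hx.le hxy hm
  · rw [abs_of_nonpos hm, rpow_neg hC.le, ← inv_rpow hC.le, ← mul_rpow (by positivity) hy.le]
    exact rpow_le_rpow_of_nonpos (by positivity) ((inv_mul_le_iff₀ hC).2 hyx) hm

theorem ofReal_le_coe_mul_ofReal {C : ℝ≥0} {x y : ℝ} (h : x ≤ C * y) :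
    ENNReal.ofReal x ≤ C * ENNReal.ofReal y := by
  rw [← ENNReal.ofReal_coe_nnreal, ← ENNReal.ofReal_mul C.coe_nonneg]
  exact ENNReal.ofReal_le_ofReal h

theorem le_coe_mul_trans {C D : ℝ≥0} {x y z : ℝ≥0∞} (hxy : x ≤ C * y) (hyz : y ≤ D * z) :
    x ≤ (C * D : ℝ≥0) * z := by
  rw [ENNReal.coe_mul, mul_assoc]
  exact hxy.trans (by gcongr)

theorem lintegral_lintegral_le_coe_mul {α β : Type*} [MeasurableSpace α] [MeasurableSpace β]
    {μ μ' : Measure α} {ν ν' : Measure β} {C D : ℝ≥0} {f F : α → β → ℝ≥0∞} (hμ : μ ≤ C • μ')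
    (hν : ν ≤ D • ν') (h : ∀ᵐ x ∂μ, ∀ᵐ y ∂ν, f x y ≤ F x y) :
    ∫⁻ x, ∫⁻ y, f x y ∂ν ∂μ ≤ (C * D : ℝ≥0) * ∫⁻ x, ∫⁻ y, F x y ∂ν' ∂μ' := by
  calc ∫⁻ x, ∫⁻ y, f x y ∂ν ∂μ ≤ ∫⁻ x, ∫⁻ y, F x y ∂ν ∂μ :=
        lintegral_mono_ae (h.mono fun x hx => lintegral_mono_ae hx)
    _ ≤ ∫⁻ x, ∫⁻ y, F x y ∂(D • ν') ∂(C • μ') :=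
        lintegral_mono' hμ fun x => lintegral_mono' hν le_rfl
    _ = (C * D : ℝ≥0) * ∫⁻ x, ∫⁻ y, F x y ∂ν' ∂μ' := by
        simp only [lintegral_smul_measure, ENNReal.smul_def, smul_eq_mul]
        rw [lintegral_const_mul' _ _ ENNReal.coe_ne_top, ENNReal.coe_mul, mul_assoc]

end Comparison

section WeightedMeasure

/-- The measure `w(x) dx` on `s`, the weight `w` being read as `0` where it is negative. -/
noncomputable def weightedMeasure (s : Set ℝ) (w : ℝ → ℝ) : Measure ℝ :=
  (volume.restrict s).withDensity fun x => ENNReal.ofReal (w x)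

variable {s t : Set ℝ} {v w : ℝ → ℝ}

theorem lintegral_weightedMeasure (hw : Measurable w) (f : ℝ → ℝ≥0∞) :
    ∫⁻ x, f x ∂weightedMeasure s w = ∫⁻ x in s, ENNReal.ofReal (w x) * f x :=
  lintegral_withDensity_eq_lintegral_mul_non_measurable _ hw.ennreal_ofReal
    (.of_forall fun _ => ENNReal.ofReal_lt_top) f

theorem ae_weightedMeasure_mem (hs : MeasurableSet s) : ∀ᵐ x ∂weightedMeasure s w, x ∈ s :=
  (withDensity_absolutelyContinuous _ _).ae_le (ae_restrict_mem hs)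

theorem weightedMeasure_le_smul {C : ℝ≥0} (hs : MeasurableSet s) (hst : s ⊆ t)
    (hwv : ∀ x ∈ s, w x ≤ C * v x) :
    weightedMeasure s w ≤ C • weightedMeasure t v := by
  refine Measure.le_iff.2 fun A hA => ?_
  simp only [weightedMeasure, Measure.smul_apply, withDensity_apply _ hA, ENNReal.smul_def,
    smul_eq_mul]
  rw [Measure.restrict_restrict hA, Measure.restrict_restrict hA,
    ← lintegral_const_mul' _ _ ENNReal.coe_ne_top]
  exact (setLIntegral_mono' (hA.inter hs) fun x hx => ofReal_le_coe_mul_ofReal (hwv x hx.2)).trans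
    (lintegral_mono_set (inter_subset_inter_right A hst))

end WeightedMeasure

section PowerMeasure

/-- The measure `x ^ (s - 1) dx` on the interval `(0, L]`. -/
noncomputable def powerMeasure (s L : ℝ) : Measure ℝ :=
  weightedMeasure (Ioc 0 L) fun x => x ^ (s - 1)

variable {s p L M : ℝ}

theorem lintegral_powerMeasure (f : ℝ → ℝ≥0∞) :
    ∫⁻ x, f x ∂powerMeasure s L = ∫⁻ x in Ioc 0 L, ENNReal.ofReal (x ^ (s - 1)) * f x :=
  lintegral_weightedMeasure (by fun_prop) f

theorem ae_powerMeasure_mem : ∀ᵐ x ∂powerMeasure s L, x ∈ Ioc 0 L :=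
  ae_weightedMeasure_mem measurableSet_Ioc

theorem setLIntegral_rpow_sub_one (hs : 0 < s) (hM : 0 ≤ M) :
    ∫⁻ x in Ioc 0 M, ENNReal.ofReal (x ^ (s - 1)) = ENNReal.ofReal (M ^ s / s) := by
  have hint : IntegrableOn (fun x : ℝ => x ^ (s - 1)) (Ioc 0 M) :=
    (intervalIntegrable_iff_integrableOn_Ioc_of_le hM).1
      (intervalIntegral.intervalIntegrable_rpow' (by linarith))
  rw [← ofReal_integral_eq_lintegral_ofReal hint
    ((ae_restrict_mem measurableSet_Ioc).mono fun x hx => rpow_nonneg hx.1.le _),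
    ← intervalIntegral.integral_of_le hM, integral_rpow (.inl (by linarith)), sub_add_cancel,
    zero_rpow hs.ne', sub_zero]

theorem mul_rpow_div_le_lintegral_powerMeasure (hs : 0 < s) (hM : 0 ≤ M) (hML : M ≤ L) {c : ℝ≥0∞}
    {f : ℝ → ℝ≥0∞} (hf : ∀ x ∈ Ioc 0 M, c ≤ f x) :
    c * ENNReal.ofReal (M ^ s / s) ≤ ∫⁻ x, f x ∂powerMeasure s L := by
  rw [← setLIntegral_rpow_sub_one hs hM, lintegral_powerMeasure,
    ← lintegral_const_mul _ (by fun_prop)]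
  refine (setLIntegral_mono' measurableSet_Ioc fun x hx => ?_).trans
    (lintegral_mono_set (Ioc_subset_Ioc_right hML))
  rw [mul_comm]
  gcongr
  exact hf x hx

theorem lintegral_exp_neg_mul_rpow_le (hs : 0 < s) (hp : 0 < p) :
    ∃ C : ℝ≥0, ∀ x : ℝ, 0 ≤ x →
      ∫⁻ y, ENNReal.ofReal (exp (-(x * y ^ p))) ∂powerMeasure s L ≤
        C * ENNReal.ofReal ((1 + x) ^ (-(s / p))) := by
  refine ⟨(exp (L ^ p) * (1 / p * Gamma (s / p))).toNNReal, fun x hx => ?_⟩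
  have hint := integrableOn_rpow_mul_exp_neg_mul_rpow (s := s - 1) (b := 1 + x) (by linarith) hp
    (by linarith)
  have hgamma : ∫⁻ y in Ioi 0, ENNReal.ofReal (y ^ (s - 1) * exp (-(1 + x) * y ^ p)) =
      ENNReal.ofReal ((1 + x) ^ (-(s / p)) * (1 / p) * Gamma (s / p)) := by
    rw [← ofReal_integral_eq_lintegral_ofReal hint ((ae_restrict_mem measurableSet_Ioi).mono
      fun y hy => mul_nonneg (rpow_nonneg (le_of_lt hy) _) (exp_pos _).le),
      integral_rpow_mul_exp_neg_mul_rpow hp (by linarith) (by linarith), sub_add_cancel, neg_div]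
  calc ∫⁻ y, ENNReal.ofReal (exp (-(x * y ^ p))) ∂powerMeasure s L
      = ∫⁻ y in Ioc 0 L, ENNReal.ofReal (y ^ (s - 1)) * ENNReal.ofReal (exp (-(x * y ^ p))) :=
        lintegral_powerMeasure _
    _ ≤ ∫⁻ y in Ioc 0 L, ENNReal.ofReal (exp (L ^ p)) *
          ENNReal.ofReal (y ^ (s - 1) * exp (-(1 + x) * y ^ p)) := by
        refine setLIntegral_mono' measurableSet_Ioc fun y hy => ?_
        rw [← ENNReal.ofReal_mul (rpow_nonneg hy.1.le _), ← ENNReal.ofReal_mul (exp_pos _).le,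
          mul_left_comm, ← exp_add]
        have hyL : y ^ p ≤ L ^ p := rpow_le_rpow hy.1.le hy.2 hp.le
        gcongr
        · exact rpow_nonneg hy.1.le _
        · linarith
    _ ≤ ∫⁻ y in Ioi 0, ENNReal.ofReal (exp (L ^ p)) *
          ENNReal.ofReal (y ^ (s - 1) * exp (-(1 + x) * y ^ p)) :=
        lintegral_mono_set Ioc_subset_Ioi_self
    _ = _ := by
        rw [lintegral_const_mul' _ _ ENNReal.ofReal_ne_top, hgamma,
          ← ENNReal.ofReal_mul (exp_pos _).le, ENNReal.ofNNReal_toNNReal,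
          ← ENNReal.ofReal_mul (by positivity)]
        congr 1
        ring

theorem le_lintegral_exp_neg_mul_rpow (hs : 0 < s) (hp : 0 < p) (hL : 0 < L) :
    ∃ C : ℝ≥0, ∀ x : ℝ, 0 ≤ x →
      ENNReal.ofReal ((1 + x) ^ (-(s / p))) ≤
        C * ∫⁻ y, ENNReal.ofReal (exp (-(x * y ^ p))) ∂powerMeasure s L := by
  refine ⟨(exp (L ^ p) * (s / L ^ s)).toNNReal, fun x hx => ?_⟩
  set δ := (1 + x) ^ (-p⁻¹)
  have hδ0 : 0 < δ := by positivity
  have hδ1 : δ ≤ 1 := rpow_le_one_of_one_le_of_nonpos (by linarith) (by simp [hp.le])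
  have hδp : δ ^ p = (1 + x)⁻¹ := by
    rw [← rpow_mul (by linarith), neg_mul, inv_mul_cancel₀ hp.ne', rpow_neg_one]
  have hexponent : ∀ y ∈ Ioc 0 (L * δ), x * y ^ p ≤ L ^ p := fun y hy => by
    have hyp : y ^ p ≤ L ^ p * (1 + x)⁻¹ := by
      rw [← hδp, ← mul_rpow hL.le hδ0.le]
      exact rpow_le_rpow hy.1.le hy.2 hp.le
    have hx1 : x * (1 + x)⁻¹ ≤ 1 := by rw [← div_eq_mul_inv, div_le_one (by linarith)]; linarith
    calc x * y ^ p ≤ x * (L ^ p * (1 + x)⁻¹) := by gcongr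
      _ = L ^ p * (x * (1 + x)⁻¹) := by ring
      _ ≤ L ^ p := mul_le_of_le_one_right (by positivity) hx1
  have hmass := mul_rpow_div_le_lintegral_powerMeasure hs (by positivity)
    (mul_le_of_le_one_right hL.le hδ1) fun y hy =>
      ENNReal.ofReal_le_ofReal (exp_le_exp.2 (neg_le_neg (hexponent y hy)))
  refine le_trans (le_of_eq ?_) (mul_le_mul_right hmass _)
  rw [ENNReal.ofNNReal_toNNReal, ← ENNReal.ofReal_mul (by positivity),
    ← ENNReal.ofReal_mul (by positivity)]
  congr 1
  rw [mul_rpow hL.le hδ0.le, ← rpow_mul (by linarith), exp_neg, neg_mul, neg_div',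
    inv_mul_eq_div]
  field_simp

variable {d k l r t X : ℝ}

theorem lintegral_add_rpow_neg_le_add (hs : 0 < s) (hr : 0 ≤ r) (hX : 0 < X) :
    ∫⁻ x, ENNReal.ofReal ((X + x) ^ (-r)) ∂powerMeasure s L ≤
      ENNReal.ofReal (X ^ (s - r) / s) + ∫⁻ x in Ioc X L, ENNReal.ofReal (x ^ (s - r - 1)) := by
  have hnear : ∫⁻ x in Ioc 0 X, ENNReal.ofReal (x ^ (s - 1)) * ENNReal.ofReal ((X + x) ^ (-r)) ≤
      ENNReal.ofReal (X ^ (s - r) / s) := by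
    rw [sub_eq_add_neg s r, rpow_add hX, mul_div_right_comm, ENNReal.ofReal_mul (by positivity),
      ← setLIntegral_rpow_sub_one hs hX.le, ← lintegral_mul_const' _ _ ENNReal.ofReal_ne_top]
    refine setLIntegral_mono' measurableSet_Ioc fun x hx => ?_
    gcongr _ * ENNReal.ofReal ?_
    exact rpow_le_rpow_of_nonpos hX (by linarith [hx.1]) (by linarith)
  have hfar : ∫⁻ x in Ioc X L, ENNReal.ofReal (x ^ (s - 1)) * ENNReal.ofReal ((X + x) ^ (-r)) ≤
      ∫⁻ x in Ioc X L, ENNReal.ofReal (x ^ (s - r - 1)) := by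
    refine setLIntegral_mono' measurableSet_Ioc fun x hx => ?_
    have hx0 : 0 < x := hX.trans hx.1
    rw [show s - r - 1 = s - 1 + -r by ring, rpow_add hx0, ENNReal.ofReal_mul (by positivity)]
    gcongr _ * ENNReal.ofReal ?_
    exact rpow_le_rpow_of_nonpos hx0 (by linarith) (by linarith)
  rw [lintegral_powerMeasure]
  calc _ ≤ ∫⁻ x in Ioc 0 X ∪ Ioc X L,
          ENNReal.ofReal (x ^ (s - 1)) * ENNReal.ofReal ((X + x) ^ (-r)) :=
        lintegral_mono_set Ioc_subset_Ioc_union_Ioc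
    _ ≤ _ := lintegral_union_le _ _ _
    _ ≤ _ := add_le_add hnear hfar

theorem lintegral_add_rpow_neg_le (hs : 0 < s) (hd : 0 < d) (hX : 0 < X) :
    ∫⁻ x, ENNReal.ofReal ((X + x) ^ (-(s + d))) ∂powerMeasure s L ≤
      ENNReal.ofReal ((1 / s + 1 / d) * X ^ (-d)) := by
  have htail : ∫⁻ x in Ioi X, ENNReal.ofReal (x ^ (-d - 1)) = ENNReal.ofReal (X ^ (-d) / d) := by
    rw [← ofReal_integral_eq_lintegral_ofReal (integrableOn_Ioi_rpow_of_lt (by linarith) hX)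
      ((ae_restrict_mem measurableSet_Ioi).mono fun x hx => rpow_nonneg (hX.trans hx).le _),
      integral_Ioi_rpow_of_lt (by linarith) hX, sub_add_cancel, neg_div_neg_eq]
  refine (lintegral_add_rpow_neg_le_add hs (by linarith) hX).trans ?_
  rw [show s - (s + d) = -d by ring, add_mul, ENNReal.ofReal_add (by positivity) (by positivity),
    one_div_mul_eq_div, one_div_mul_eq_div, ← htail]
  gcongr
  exact Ioc_subset_Ioi_self

theorem setLIntegral_Ioc_rpow_sub_one_le (ht : 0 ≤ t) (hl : 0 ≤ l) :
    ∫⁻ x in Ioc (exp (-2 * t)) 1, ENNReal.ofReal (x ^ (l - 1)) ≤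
      ENNReal.ofReal (3 * ((1 + t) / (1 + l * t))) := by
  have hη : exp (-2 * t) ≤ 1 := exp_le_one_iff.2 (by linarith)
  have hzero : (0 : ℝ) ∉ uIcc (exp (-2 * t)) 1 := by
    rw [uIcc_of_le hη]
    exact fun h => (exp_pos _).not_ge h.1
  have hint : ∀ m : ℝ, IntervalIntegrable (fun x => x ^ m) volume (exp (-2 * t)) 1 := fun m =>
    intervalIntegral.intervalIntegrable_rpow (.inr hzero)
  have hlog : ∫ x in exp (-2 * t)..1, x ^ (l - 1) ≤ 2 * t := by
    calc ∫ x in exp (-2 * t)..1, x ^ (l - 1) ≤ ∫ x in exp (-2 * t)..1, x ^ (-1 : ℝ) := by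
          refine intervalIntegral.integral_mono_on hη (hint _) (hint _) fun x hx => ?_
          exact rpow_le_rpow_of_exponent_ge ((exp_pos _).trans_le hx.1) hx.2 (by linarith)
      _ = 2 * t := by
          simp only [rpow_neg_one]
          rw [integral_inv hzero, one_div, log_inv, log_exp]
          ring
  have hpow : l * ∫ x in exp (-2 * t)..1, x ^ (l - 1) ≤ 1 := by
    rcases hl.eq_or_lt with rfl | hl
    · simp
    rw [integral_rpow (.inl (by linarith)), sub_add_cancel, mul_div_cancel₀ _ hl.ne', one_rpow]
    linarith [rpow_pos_of_pos (exp_pos (-2 * t)) l]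
  rw [← ofReal_integral_eq_lintegral_ofReal
    ((intervalIntegrable_iff_integrableOn_Ioc_of_le hη).1 (hint _))
    ((ae_restrict_mem measurableSet_Ioc).mono fun x hx =>
      rpow_nonneg ((exp_pos _).trans hx.1).le _),
    ← intervalIntegral.integral_of_le hη]
  refine ENNReal.ofReal_le_ofReal ?_
  rw [mul_div_assoc', le_div_iff₀ (by positivity)]
  nlinarith [mul_le_mul_of_nonneg_right hpow ht]

theorem lintegral_exp_add_rpow_neg_le (hk : 0 < k) (ht : 0 ≤ t) (hl : 0 ≤ l) (hlk : l ≤ k) :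
    ∫⁻ x, ENNReal.ofReal ((exp (-2 * t) + x) ^ (-(k - l))) ∂powerMeasure k 1 ≤
      ENNReal.ofReal ((1 / k + 3) * ((1 + t) / (1 + l * t))) := by
  refine (lintegral_add_rpow_neg_le_add hk (by linarith) (exp_pos _)).trans ?_
  have hnear : exp (-2 * t) ^ l ≤ (1 + t) / (1 + l * t) := by
    calc exp (-2 * t) ^ l = (exp (2 * (l * t)))⁻¹ := by rw [← exp_mul, ← exp_neg]; ring_nf
      _ ≤ (1 + l * t)⁻¹ := by
          have hlt : 0 ≤ l * t := by positivity
          gcongr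
          linarith [add_one_le_exp (2 * (l * t))]
      _ ≤ (1 + t) / (1 + l * t) := by
          rw [inv_eq_one_div]
          gcongr
          linarith
  rw [add_mul, ENNReal.ofReal_add (by positivity) (by positivity), sub_sub_cancel,
    one_div_mul_eq_div]
  gcongr
  exact setLIntegral_Ioc_rpow_sub_one_le ht hl

theorem setLIntegral_Ioc_inv {a b : ℝ} (ha : 0 < a) (hab : a ≤ b) :
    ∫⁻ x in Ioc a b, ENNReal.ofReal x⁻¹ = ENNReal.ofReal (log (b / a)) := by
  have hzero : (0 : ℝ) ∉ uIcc a b := by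
    rw [uIcc_of_le hab]
    exact fun h => ha.not_ge h.1
  have hint : IntervalIntegrable (fun x => x⁻¹) volume a b :=
    intervalIntegral.intervalIntegrable_inv (fun x hx h => hzero (h ▸ hx)) continuousOn_id
  rw [← integral_inv hzero, intervalIntegral.integral_of_le hab,
    ofReal_integral_eq_lintegral_ofReal
      ((intervalIntegrable_iff_integrableOn_Ioc_of_le hab).1 hint)]
  exact (ae_restrict_mem measurableSet_Ioc).mono fun x hx => inv_nonneg.2 (ha.trans hx.1).le

theorem le_setLIntegral_Ioc_rpow_sub_one (ht : 1 ≤ t) (hl : 0 ≤ l) (hl1 : l ≤ 1) :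
    ENNReal.ofReal ((1 + t) / (1 + l * t)) ≤ ENNReal.ofReal (4 * exp 2) *
      ∫⁻ x in Ioc (exp (-2 * t)) (1 / 2), ENNReal.ofReal (x ^ (l - 1)) := by
  have ht0 : 0 < t := by linarith
  set M := t / (1 + l * t) with hM
  have hlM : l * M ≤ 1 := by rw [hM, mul_div_assoc', div_le_one (by positivity)]; linarith
  have hMt : M ≤ t := div_le_self ht0.le (by linarith [mul_nonneg hl ht0.le])
  have hM2 : 1 / 2 ≤ M := by rw [hM, div_le_div_iff₀ (by norm_num) (by positivity)]; nlinarith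
  have hη : exp (-2 * M) ≤ 1 / 2 := by
    have hexp : 2 ≤ exp (2 * M) := by linarith [add_one_le_exp (2 * M)]
    rw [neg_mul, exp_neg, one_div]
    gcongr
  have hweight : ∀ x ∈ Ioc (exp (-2 * M)) (1 / 2), exp (-2) * x⁻¹ ≤ x ^ (l - 1) := fun x hx => by
    have hx0 : 0 < x := (exp_pos _).trans hx.1
    rw [sub_eq_add_neg, rpow_add hx0, rpow_neg_one]
    gcongr
    calc exp (-2) ≤ exp (-2 * M) ^ l := by rw [← exp_mul]; gcongr; linarith
      _ ≤ x ^ l := rpow_le_rpow (exp_pos _).le hx.1.le hl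
  have hlog : log (1 / 2 / exp (-2 * M)) = 2 * M - log 2 := by
    rw [log_div (by norm_num) (exp_pos _).ne', log_exp, one_div, log_inv]
    ring
  have hmain : ENNReal.ofReal (exp (-2) * (2 * M - log 2)) ≤
      ∫⁻ x in Ioc (exp (-2 * t)) (1 / 2), ENNReal.ofReal (x ^ (l - 1)) := by
    rw [← hlog, ENNReal.ofReal_mul (exp_pos _).le, ← setLIntegral_Ioc_inv (exp_pos _) hη,
      ← lintegral_const_mul' _ _ ENNReal.ofReal_ne_top]
    refine (setLIntegral_mono' measurableSet_Ioc fun x hx => ?_).trans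
      (lintegral_mono_set (Ioc_subset_Ioc_left (exp_le_exp.2 (by linarith))))
    rw [← ENNReal.ofReal_mul (exp_pos _).le]
    exact ENNReal.ofReal_le_ofReal (hweight x hx)
  refine le_trans ?_ (mul_le_mul_right hmain _)
  rw [← ENNReal.ofReal_mul (by positivity)]
  refine ENNReal.ofReal_le_ofReal ?_
  calc (1 + t) / (1 + l * t) ≤ 2 * M := by rw [hM, mul_div_assoc']; gcongr; linarith
    _ ≤ 4 * (2 * M - log 2) := by linarith [log_two_lt_d9]
    _ = 4 * exp 2 * (exp (-2) * (2 * M - log 2)) := by rw [exp_neg]; field_simp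

end PowerMeasure

section NormBase

/-- The base `|1 - τ + (1 - a) * τ * exp (i * φ)| ^ 2` of Koornwinder's integrand divided by
`exp (2 * t)`, in terms of `τ = (1 - exp (-2 * t)) / 2`, `a = 1 - r` and `c = cos φ`. -/
def normBase (τ a c : ℝ) : ℝ :=
  (1 - τ) ^ 2 + 2 * (1 - a) * c * τ * (1 - τ) + (1 - a) ^ 2 * τ ^ 2

variable {τ a c c' q φ : ℝ}

theorem one_sub_normBase (τ a c : ℝ) :
    1 - normBase τ a c = 2 * τ * (1 - τ) * (1 - (1 - a) * c) + τ ^ 2 * (a * (2 - a)) := by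
  unfold normBase
  ring

theorem normBase_eq_sq_add (τ a c : ℝ) :
    normBase τ a c = (1 - 2 * τ + a * τ) ^ 2 + 2 * (1 - a) * (τ * (1 - τ)) * (1 + c) := by
  unfold normBase
  ring

theorem sq_le_normBase (hτ : τ ∈ Icc 0 1) (ha : a ≤ 1) (hc : -1 ≤ c) :
    (1 - 2 * τ + a * τ) ^ 2 ≤ normBase τ a c := by
  rw [normBase_eq_sq_add]
  have hprod : 0 ≤ τ * (1 - τ) := mul_nonneg hτ.1 (sub_nonneg.2 hτ.2)
  exact le_add_of_nonneg_right
    (mul_nonneg (mul_nonneg (by linarith) hprod) (by linarith))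

theorem normBase_pos (hτ : τ ∈ Ico 0 (1 / 2)) (ha : a ∈ Icc 0 1) (hc : -1 ≤ c) :
    0 < normBase τ a c := by
  refine lt_of_lt_of_le ?_ (sq_le_normBase ⟨hτ.1, by linarith [hτ.2]⟩ ha.2 hc)
  have hbase : 0 < 1 - 2 * τ + a * τ := by linarith [hτ.2, mul_nonneg ha.1 hτ.1]
  positivity

theorem normBase_mono (hτ : τ ∈ Icc 0 1) (ha : a ≤ 1) (hc : c ≤ c') :
    normBase τ a c ≤ normBase τ a c' := by
  rw [normBase_eq_sq_add, normBase_eq_sq_add]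
  have hprod : 0 ≤ τ * (1 - τ) := mul_nonneg hτ.1 (sub_nonneg.2 hτ.2)
  have hcoef : 0 ≤ 2 * (1 - a) * (τ * (1 - τ)) := mul_nonneg (by linarith) hprod
  linarith [mul_le_mul_of_nonneg_left hc hcoef]

theorem le_one_sub_normBase (hτ : τ ∈ Ico 0 (1 / 2)) (ha : a ∈ Icc 0 1) (hc : c ∈ Icc (-1) 1) :
    τ * (a + (1 - c)) / 3 ≤ 1 - normBase τ a c := by
  obtain ⟨⟨hτ0, hτ1⟩, ⟨ha0, ha1⟩, hc0, hc1⟩ := hτ, ha, hc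
  have hlin : (a + (1 - c)) / 3 ≤ 1 - (1 - a) * c := by
    nlinarith [mul_nonneg ha0 (sub_nonneg.2 hc0), mul_nonneg (sub_nonneg.2 ha1) (sub_nonneg.2 hc1)]
  have hsq : 0 ≤ τ ^ 2 * (a * (2 - a)) :=
    mul_nonneg (sq_nonneg τ) (mul_nonneg ha0 (by linarith))
  rw [one_sub_normBase]
  calc τ * (a + (1 - c)) / 3 = τ * ((a + (1 - c)) / 3) := by ring
    _ ≤ (2 * τ * (1 - τ)) * (1 - (1 - a) * c) := by
        refine mul_le_mul (by nlinarith) hlin (by linarith) ?_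
        exact mul_nonneg (by linarith) (by linarith)
    _ ≤ _ := le_add_of_nonneg_right hsq

theorem one_sub_normBase_le (hτ : τ ∈ Ico 0 (1 / 2)) (ha : 0 ≤ a) (hc : c ≤ 1) :
    1 - normBase τ a c ≤ 3 * τ * (a + (1 - c)) := by
  obtain ⟨hτ0, hτ1⟩ := hτ
  rw [one_sub_normBase]
  have hfirst : 2 * τ * (1 - τ) * (1 - (1 - a) * c) ≤ 2 * τ * (a + (1 - c)) := by
    have hac : a * c ≤ a := mul_le_of_le_one_right ha hc
    have hcoef : 0 ≤ 2 * τ * (1 - τ) := mul_nonneg (by linarith) (by linarith)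
    calc 2 * τ * (1 - τ) * (1 - (1 - a) * c) ≤ 2 * τ * (1 - τ) * (a + (1 - c)) :=
          mul_le_mul_of_nonneg_left (by linarith) hcoef
      _ ≤ 2 * τ * (a + (1 - c)) :=
          mul_le_mul_of_nonneg_right (mul_le_of_le_one_right (by linarith) (by linarith))
            (by linarith)
  have hsecond : τ ^ 2 * (a * (2 - a)) ≤ τ * a := by
    nlinarith [mul_nonneg hτ0 ha, mul_nonneg (mul_nonneg hτ0 hτ0) (mul_nonneg ha ha)]
  nlinarith [mul_nonneg hτ0 (sub_nonneg.2 hc)]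

theorem normBase_le_one (hτ : τ ∈ Ico 0 (1 / 2)) (ha : a ∈ Icc 0 1) (hc : c ∈ Icc (-1) 1) :
    normBase τ a c ≤ 1 := by
  have hgap : 0 ≤ τ * (a + (1 - c)) := mul_nonneg hτ.1 (by linarith [ha.1, hc.2])
  linarith [le_one_sub_normBase hτ ha hc]

theorem one_fourth_le_normBase (hτ : τ ∈ Ico 0 (1 / 2)) (ha : a ≤ 1) (hc : 0 ≤ c) :
    1 / 4 ≤ normBase τ a c := by
  obtain ⟨hτ0, hτ1⟩ := hτ
  have hcross : 0 ≤ 2 * (1 - a) * c * τ * (1 - τ) := by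
    have h1a : 0 ≤ 1 - a := by linarith
    have h1τ : 0 ≤ 1 - τ := by linarith
    positivity
  unfold normBase
  nlinarith [sq_nonneg ((1 - a) * τ)]

theorem sq_div_eight_le_one_sub_cos (hφ : φ ∈ Icc 0 (π / 2)) : φ ^ 2 / 8 ≤ 1 - cos φ := by
  have hcos := cos_le_one_sub_mul_cos_sq (x := φ)
    (by rw [abs_of_nonneg hφ.1]; linarith [hφ.2, pi_pos])
  have hpi : (1 : ℝ) / 8 ≤ 2 / π ^ 2 := by
    rw [div_le_div_iff₀ (by norm_num) (by positivity)]
    nlinarith [pi_le_four, pi_pos]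
  nlinarith [sq_nonneg φ]

theorem sq_le_normBase_neg_cos (hτ : τ ∈ Ico 0 (1 / 2)) (ha : a ∈ Icc 0 1)
    (hφ : φ ∈ Icc 0 (π / 2)) :
    ((1 - 2 * τ + a + φ) / 32) ^ 2 ≤ normBase τ a (-cos φ) := by
  have hφ2 : φ ≤ 2 := by linarith [hφ.2, pi_le_four]
  obtain ⟨⟨hτ0, hτ1⟩, ha0, ha1⟩ := hτ, ha
  have haτ0 : 0 ≤ a * τ := mul_nonneg ha0 hτ0
  have hφ0 := hφ.1
  have hnonneg : 0 ≤ (1 - 2 * τ + a + φ) / 32 := by linarith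
  rcases le_total (1 / 8) (1 - 2 * τ + a * τ) with hfar | hnear
  · refine le_trans ?_ (sq_le_normBase ⟨hτ0, by linarith⟩ ha1 (neg_le_neg (cos_le_one φ)))
    gcongr
    linarith
  · have hτ' : 7 / 16 ≤ τ := by linarith
    have ha' : a ≤ 1 / 2 := by nlinarith
    have hsq : (7 / 16 * (1 - 2 * τ + a)) ^ 2 ≤ (1 - 2 * τ + a * τ) ^ 2 := by
      have : 0 ≤ 7 / 16 * (1 - 2 * τ + a) := by linarith
      gcongr
      nlinarith
    have hcross : 2 * (1 / 2) * (7 / 16 * (1 / 2)) * (φ ^ 2 / 8) ≤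
        2 * (1 - a) * (τ * (1 - τ)) * (1 - cos φ) := by
      have h1τ : 1 / 2 ≤ 1 - τ := by linarith
      have h1a : 1 / 2 ≤ 1 - a := by linarith
      have hcos := sq_div_eight_le_one_sub_cos hφ
      gcongr
    rw [normBase_eq_sq_add, ← sub_eq_add_neg]
    nlinarith [sq_nonneg (1 - 2 * τ + a - φ), sq_nonneg φ, sq_nonneg (1 - 2 * τ + a)]

theorem normBase_neg_cos_le (hτ : τ ∈ Ico 0 (1 / 2)) (ha : a ≤ 1) (hτa : 1 - 2 * τ ≤ a)
    (hφ : φ ∈ Icc 0 a) : normBase τ a (-cos φ) ≤ (2 * a) ^ 2 := by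
  obtain ⟨⟨hτ0, hτ1⟩, hφ0, hφa⟩ := hτ, hφ
  have ha0 : 0 ≤ a := hφ0.trans hφa
  have haτ : a * τ ≤ a / 2 := by nlinarith
  have hsq : (1 - 2 * τ + a * τ) ^ 2 ≤ (3 / 2 * a) ^ 2 := by
    have : 0 ≤ a * τ := mul_nonneg ha0 hτ0
    gcongr <;> linarith
  have hcos : 1 - cos φ ≤ a ^ 2 / 2 := by
    linarith [one_sub_sq_div_two_le_cos (x := φ), pow_le_pow_left₀ hφ0 hφa 2]
  have hcross : 2 * (1 - a) * (τ * (1 - τ)) * (1 - cos φ) ≤ 2 * 1 * (1 / 2 * 1) * (a ^ 2 / 2) := by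
    have h1τ : 0 ≤ 1 - τ := by linarith
    have h1a : 0 ≤ 1 - a := by linarith
    have hcos0 : 0 ≤ 1 - cos φ := by linarith [cos_le_one φ]
    gcongr <;> linarith
  rw [normBase_eq_sq_add, ← sub_eq_add_neg]
  nlinarith

theorem normBase_cos_rpow_le_exp (hτ : τ ∈ Ico 0 (1 / 2)) (ha : a ∈ Icc 0 1)
    (hφ : φ ∈ Icc 0 (π / 2)) (hq : 0 ≤ q) :
    normBase τ a (cos φ) ^ q ≤ exp (-(τ * q / 24 * a)) * exp (-(τ * q / 24 * φ ^ 2)) := by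
  have hcos : cos φ ∈ Icc (-1) 1 := cos_mem_Icc φ
  have hgap : τ * (a + φ ^ 2) / 24 ≤ 1 - normBase τ a (cos φ) := by
    refine le_trans ?_ (le_one_sub_normBase hτ ha hcos)
    nlinarith [mul_le_mul_of_nonneg_left (sq_div_eight_le_one_sub_cos hφ) hτ.1,
      mul_nonneg hτ.1 ha.1]
  calc normBase τ a (cos φ) ^ q ≤ exp (-(τ * (a + φ ^ 2) / 24)) ^ q := by
        refine rpow_le_rpow (normBase_pos hτ ha hcos.1).le ?_ hq
        linarith [add_one_le_exp (-(τ * (a + φ ^ 2) / 24))]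
    _ = _ := by
        rw [← exp_mul, ← exp_add]
        ring_nf

theorem exp_le_normBase_cos_rpow (hτ : τ ∈ Ico 0 (1 / 2)) (ha : a ∈ Icc 0 1)
    (hφ : φ ∈ Icc 0 (π / 2)) (hq : 0 ≤ q) :
    exp (-(12 * τ * q * a)) * exp (-(12 * τ * q * φ ^ 2)) ≤ normBase τ a (cos φ) ^ q := by
  set G := normBase τ a (cos φ)
  have hcos : 0 ≤ cos φ := cos_nonneg_of_mem_Icc ⟨by linarith [hφ.1, pi_pos], hφ.2⟩
  have hG4 : 1 / 4 ≤ G := one_fourth_le_normBase hτ ha.2 hcos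
  have hG0 : 0 < G := by linarith
  have hgap : 1 - G ≤ 3 * τ * (a + φ ^ 2) := by
    refine (one_sub_normBase_le hτ ha.1 (cos_le_one φ)).trans ?_
    have hτ0 := hτ.1
    gcongr
    linarith [one_sub_sq_div_two_le_cos (x := φ), sq_nonneg φ]
  have hlog : -(12 * τ * (a + φ ^ 2)) ≤ log G := by
    refine le_trans ?_ (one_sub_inv_le_log_of_pos hG0)
    have hG1 : G ≤ 1 := normBase_le_one hτ ha (cos_mem_Icc φ)
    have hinv : G⁻¹ ≤ 4 := by rw [inv_le_comm₀ hG0 (by norm_num)]; linarith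
    have hmul : 1 - G⁻¹ = -(G⁻¹ * (1 - G)) := by field_simp; ring
    linarith [mul_le_mul hinv hgap (sub_nonneg.2 hG1) zero_le_four]
  rw [← exp_add, rpow_def_of_pos hG0]
  gcongr
  nlinarith

end NormBase

section Measures

/-- The factor `(1 - r ^ 2) ^ (k₁ - 1) * r ^ (2 * k₂) dr` of Koornwinder's measure, in the distance
`a = 1 - r` to the boundary of the disc. -/
noncomputable def radialMeasure (k₁ k₂ : ℝ) : Measure ℝ :=
  weightedMeasure (Ioc 0 1) fun a => (1 - (1 - a) ^ 2) ^ (k₁ - 1) * (1 - a) ^ (2 * k₂)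

/-- The factor `(sin φ) ^ (2 * k₂ - 1) dφ` of Koornwinder's measure, on one half of its domain. -/
noncomputable def angularMeasure (k₂ : ℝ) : Measure ℝ :=
  weightedMeasure (Ioc 0 (π / 2)) fun φ => sin φ ^ (2 * k₂ - 1)

variable {k₁ k₂ : ℝ}

theorem ae_radialMeasure_mem : ∀ᵐ a ∂radialMeasure k₁ k₂, a ∈ Icc (0 : ℝ) 1 :=
  (ae_weightedMeasure_mem measurableSet_Ioc).mono fun _ h => Ioc_subset_Icc_self h

theorem ae_angularMeasure_mem : ∀ᵐ φ ∂angularMeasure k₂, φ ∈ Icc 0 (π / 2) :=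
  (ae_weightedMeasure_mem measurableSet_Ioc).mono fun _ h => Ioc_subset_Icc_self h

theorem radialMeasure_le_smul_powerMeasure (hk₂ : 0 ≤ k₂) :
    ∃ C : ℝ≥0, radialMeasure k₁ k₂ ≤ C • powerMeasure k₁ 1 := by
  refine ⟨2 ^ |k₁ - 1|, weightedMeasure_le_smul measurableSet_Ioc subset_rfl fun a ha => ?_⟩
  have hle : (1 - (1 - a) ^ 2) ^ (k₁ - 1) ≤ 2 ^ |k₁ - 1| * a ^ (k₁ - 1) :=
    rpow_le_rpow_abs_mul_rpow (by nlinarith [ha.1, ha.2]) ha.1 (by nlinarith [ha.1])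
      (by nlinarith [ha.1, ha.2]) _
  have hr : (1 - a) ^ (2 * k₂) ≤ 1 :=
    rpow_le_one (by linarith [ha.2]) (by linarith [ha.1]) (by positivity)
  refine (mul_le_of_le_one_right (rpow_nonneg ?_ _) hr).trans (by simpa using hle)
  nlinarith [ha.1, ha.2]

theorem powerMeasure_le_smul_radialMeasure (hk₂ : 0 ≤ k₂) :
    ∃ C : ℝ≥0, powerMeasure k₁ (1 / 2) ≤ C • radialMeasure k₁ k₂ := by
  refine ⟨2 ^ |k₁ - 1| * 2 ^ (2 * k₂), weightedMeasure_le_smul measurableSet_Ioc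
    (Ioc_subset_Ioc_right (by norm_num)) fun a ha => ?_⟩
  have hle : a ^ (k₁ - 1) ≤ 2 ^ |k₁ - 1| * (1 - (1 - a) ^ 2) ^ (k₁ - 1) :=
    rpow_le_rpow_abs_mul_rpow ha.1 (by nlinarith [ha.1, ha.2]) (by nlinarith [ha.1, ha.2])
      (by nlinarith [ha.1]) _
  have hr : 1 ≤ 2 ^ (2 * k₂) * (1 - a) ^ (2 * k₂) := by
    rw [← mul_rpow (by norm_num) (by linarith [ha.2])]
    exact one_le_rpow (by linarith [ha.2]) (by positivity)
  calc a ^ (k₁ - 1) ≤ a ^ (k₁ - 1) * (2 ^ (2 * k₂) * (1 - a) ^ (2 * k₂)) :=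
        le_mul_of_one_le_right (rpow_nonneg ha.1.le _) hr
    _ ≤ 2 ^ |k₁ - 1| * (1 - (1 - a) ^ 2) ^ (k₁ - 1) * (2 ^ (2 * k₂) * (1 - a) ^ (2 * k₂)) := by
        gcongr
    _ = _ := by push_cast; ring

theorem sin_le_two_mul_and_le_two_mul_sin {φ : ℝ} (hφ : φ ∈ Ioc 0 (π / 2)) :
    sin φ ≤ 2 * φ ∧ φ ≤ 2 * sin φ := by
  have hsin := mul_le_sin hφ.1.le hφ.2
  have hpi : 1 / 2 ≤ 2 / π := by
    rw [div_le_div_iff₀ (by norm_num) pi_pos]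
    linarith [pi_le_four]
  exact ⟨by linarith [sin_le hφ.1.le, hφ.1], by nlinarith [hφ.1]⟩

theorem angularMeasure_le_smul_powerMeasure :
    ∃ C : ℝ≥0, angularMeasure k₂ ≤ C • powerMeasure (2 * k₂) (π / 2) := by
  refine ⟨2 ^ |2 * k₂ - 1|, weightedMeasure_le_smul measurableSet_Ioc subset_rfl fun φ hφ => ?_⟩
  obtain ⟨hle, hge⟩ := sin_le_two_mul_and_le_two_mul_sin hφ
  simpa using rpow_le_rpow_abs_mul_rpow (by linarith [hφ.1]) hφ.1 hle hge (2 * k₂ - 1)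

theorem powerMeasure_le_smul_angularMeasure :
    ∃ C : ℝ≥0, powerMeasure (2 * k₂) (π / 2) ≤ C • angularMeasure k₂ := by
  refine ⟨2 ^ |2 * k₂ - 1|, weightedMeasure_le_smul measurableSet_Ioc subset_rfl fun φ hφ => ?_⟩
  obtain ⟨hle, hge⟩ := sin_le_two_mul_and_le_two_mul_sin hφ
  simpa using rpow_le_rpow_abs_mul_rpow hφ.1 (by linarith [hφ.1]) hge hle (2 * k₂ - 1)

end Measures

section HalfAngle

/-- For `σ = 1` and `σ = -1` these are the contributions of the angles `φ` and `π - φ`, with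
`φ ≤ π / 2`, to Koornwinder's integral with exponent `q` and its base normalized. -/
noncomputable def halfAngleIntegral (k₁ k₂ q τ σ : ℝ) : ℝ≥0∞ :=
  ∫⁻ a, ∫⁻ φ, ENNReal.ofReal (normBase τ a (σ * cos φ) ^ q) ∂angularMeasure k₂ ∂radialMeasure k₁ k₂

variable {k₁ k₂ q q' τ σ σ' φ L L' : ℝ}

theorem mul_cos_mem_Icc (hσ : σ ∈ Icc (-1) 1) (φ : ℝ) : σ * cos φ ∈ Icc (-1) 1 := by
  rw [mem_Icc, ← abs_le, abs_mul]
  exact mul_le_one₀ (abs_le.2 hσ) (abs_nonneg _) (abs_cos_le_one φ)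

theorem halfAngleIntegral_mono_of_pointwise
    (h : ∀ a ∈ Icc (0 : ℝ) 1, ∀ φ ∈ Icc 0 (π / 2),
      normBase τ a (σ * cos φ) ^ q ≤ normBase τ a (σ' * cos φ) ^ q') :
    halfAngleIntegral k₁ k₂ q τ σ ≤ halfAngleIntegral k₁ k₂ q' τ σ' :=
  lintegral_mono_ae <| ae_radialMeasure_mem.mono fun a ha =>
    lintegral_mono_ae <| ae_angularMeasure_mem.mono fun φ hφ =>
      ENNReal.ofReal_le_ofReal (h a ha φ hφ)

theorem halfAngleIntegral_anti (hτ : τ ∈ Ico 0 (1 / 2)) (hσ : σ ∈ Icc (-1) 1) (hq : q ≤ q') :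
    halfAngleIntegral k₁ k₂ q' τ σ ≤ halfAngleIntegral k₁ k₂ q τ σ :=
  halfAngleIntegral_mono_of_pointwise fun _ ha φ _ =>
    have hcos := mul_cos_mem_Icc hσ φ
    rpow_le_rpow_of_exponent_ge (normBase_pos hτ ha hcos.1) (normBase_le_one hτ ha hcos) hq

theorem normBase_mul_cos_mono {a : ℝ} (hτ : τ ∈ Icc 0 1) (ha : a ≤ 1) (hφ : φ ∈ Icc 0 (π / 2))
    (hσ : σ ≤ σ') : normBase τ a (σ * cos φ) ≤ normBase τ a (σ' * cos φ) :=
  normBase_mono hτ ha (mul_le_mul_of_nonneg_right hσ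
    (cos_nonneg_of_mem_Icc ⟨by linarith [hφ.1, pi_pos], hφ.2⟩))

theorem halfAngleIntegral_neg_one_le (hτ : τ ∈ Ico 0 (1 / 2)) (hq : 0 ≤ q) :
    halfAngleIntegral k₁ k₂ q τ (-1) ≤ halfAngleIntegral k₁ k₂ q τ 1 :=
  halfAngleIntegral_mono_of_pointwise fun _ ha φ hφ =>
    rpow_le_rpow (normBase_pos hτ ha (mul_cos_mem_Icc (by norm_num) φ).1).le
      (normBase_mul_cos_mono ⟨hτ.1, by linarith [hτ.2]⟩ ha.2 hφ (by norm_num)) hq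

theorem halfAngleIntegral_one_le (hτ : τ ∈ Ico 0 (1 / 2)) (hq : q ≤ 0) :
    halfAngleIntegral k₁ k₂ q τ 1 ≤ halfAngleIntegral k₁ k₂ q τ (-1) :=
  halfAngleIntegral_mono_of_pointwise fun _ ha φ hφ =>
    rpow_le_rpow_of_nonpos (normBase_pos hτ ha (mul_cos_mem_Icc (by norm_num) φ).1)
      (normBase_mul_cos_mono ⟨hτ.1, by linarith [hτ.2]⟩ ha.2 hφ (by norm_num)) hq

theorem lintegral_lintegral_exp_neg_mul_exp_neg (L L' x : ℝ) :
    ∫⁻ a, ∫⁻ φ, ENNReal.ofReal (exp (-(x * a)) * exp (-(x * φ ^ 2)))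
        ∂powerMeasure (2 * k₂) L' ∂powerMeasure k₁ L =
      (∫⁻ a, ENNReal.ofReal (exp (-(x * a ^ (1 : ℝ)))) ∂powerMeasure k₁ L) *
        ∫⁻ φ, ENNReal.ofReal (exp (-(x * φ ^ (2 : ℝ)))) ∂powerMeasure (2 * k₂) L' := by
  simp only [ENNReal.ofReal_mul (exp_pos _).le, rpow_one, rpow_two]
  exact lintegral_lintegral_mul (by fun_prop) (by fun_prop)

theorem ofReal_one_add_rpow_neg_add {x : ℝ} (hx : 0 ≤ x) :
    ENNReal.ofReal ((1 + x) ^ (-(k₁ + k₂))) =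
      ENNReal.ofReal ((1 + x) ^ (-(k₁ / 1))) * ENNReal.ofReal ((1 + x) ^ (-(2 * k₂ / 2))) := by
  rw [← ENNReal.ofReal_mul (by positivity), ← rpow_add (by positivity)]
  ring_nf

theorem lintegral_lintegral_exp_neg_le (hk₁ : 0 < k₁) (hk₂ : 0 < k₂) :
    ∃ C : ℝ≥0, ∀ x : ℝ, 0 ≤ x →
      ∫⁻ a, ∫⁻ φ, ENNReal.ofReal (exp (-(x * a)) * exp (-(x * φ ^ 2)))
        ∂powerMeasure (2 * k₂) L' ∂powerMeasure k₁ L ≤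
      C * ENNReal.ofReal ((1 + x) ^ (-(k₁ + k₂))) := by
  obtain ⟨C, hC⟩ := lintegral_exp_neg_mul_rpow_le (L := L) hk₁ one_pos
  obtain ⟨D, hD⟩ := lintegral_exp_neg_mul_rpow_le (s := 2 * k₂) (L := L') (by positivity) two_pos
  refine ⟨C * D, fun x hx => ?_⟩
  rw [lintegral_lintegral_exp_neg_mul_exp_neg, ofReal_one_add_rpow_neg_add hx, ENNReal.coe_mul,
    mul_mul_mul_comm]
  exact mul_le_mul' (hC x hx) (hD x hx)

theorem le_lintegral_lintegral_exp_neg (hk₁ : 0 < k₁) (hk₂ : 0 < k₂) (hL : 0 < L) (hL' : 0 < L') :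
    ∃ C : ℝ≥0, ∀ x : ℝ, 0 ≤ x →
      ENNReal.ofReal ((1 + x) ^ (-(k₁ + k₂))) ≤
        C * ∫⁻ a, ∫⁻ φ, ENNReal.ofReal (exp (-(x * a)) * exp (-(x * φ ^ 2)))
          ∂powerMeasure (2 * k₂) L' ∂powerMeasure k₁ L := by
  obtain ⟨C, hC⟩ := le_lintegral_exp_neg_mul_rpow hk₁ one_pos hL
  obtain ⟨D, hD⟩ := le_lintegral_exp_neg_mul_rpow (s := 2 * k₂) (by positivity) two_pos hL'
  refine ⟨C * D, fun x hx => ?_⟩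
  rw [lintegral_lintegral_exp_neg_mul_exp_neg, ofReal_one_add_rpow_neg_add hx, ENNReal.coe_mul,
    mul_mul_mul_comm]
  exact mul_le_mul' (hC x hx) (hD x hx)

theorem halfAngleIntegral_one_le_rpow (hk₁ : 0 < k₁) (hk₂ : 0 < k₂) :
    ∃ C : ℝ≥0, ∀ τ ∈ Ico (0 : ℝ) (1 / 2), ∀ q : ℝ, 0 ≤ q →
      halfAngleIntegral k₁ k₂ q τ 1 ≤ C * ENNReal.ofReal ((1 + τ * q) ^ (-(k₁ + k₂))) := by
  obtain ⟨C₁, h₁⟩ := radialMeasure_le_smul_powerMeasure (k₁ := k₁) hk₂.le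
  obtain ⟨C₂, h₂⟩ := angularMeasure_le_smul_powerMeasure (k₂ := k₂)
  obtain ⟨C, hC⟩ := lintegral_lintegral_exp_neg_le (L := 1) (L' := π / 2) hk₁ hk₂
  refine ⟨C₁ * C₂ * (C * 24 ^ |-(k₁ + k₂)|), fun τ hτ q hq => ?_⟩
  have hx : 0 ≤ τ * q := mul_nonneg hτ.1 hq
  have hscale : (1 + τ * q / 24) ^ (-(k₁ + k₂)) ≤
      (24 ^ |-(k₁ + k₂)| : ℝ≥0) * (1 + τ * q) ^ (-(k₁ + k₂)) := by
    simpa using rpow_le_rpow_abs_mul_rpow (C := 24) (by positivity) (by positivity) (by linarith)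
      (by linarith) _
  refine le_coe_mul_trans (lintegral_lintegral_le_coe_mul h₁ h₂ ?_)
    (le_coe_mul_trans (hC (τ * q / 24) (by positivity)) (ofReal_le_coe_mul_ofReal hscale))
  refine ae_radialMeasure_mem.mono fun a ha => ae_angularMeasure_mem.mono fun φ hφ => ?_
  rw [one_mul]
  exact ENNReal.ofReal_le_ofReal (normBase_cos_rpow_le_exp hτ ha hφ hq)

theorem rpow_le_halfAngleIntegral_one (hk₁ : 0 < k₁) (hk₂ : 0 < k₂) :
    ∃ C : ℝ≥0, ∀ τ ∈ Ico (0 : ℝ) (1 / 2), ∀ q : ℝ, 0 ≤ q →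
      ENNReal.ofReal ((1 + τ * q) ^ (-(k₁ + k₂))) ≤ C * halfAngleIntegral k₁ k₂ q τ 1 := by
  obtain ⟨C₁, h₁⟩ := powerMeasure_le_smul_radialMeasure (k₁ := k₁) hk₂.le
  obtain ⟨C₂, h₂⟩ := powerMeasure_le_smul_angularMeasure (k₂ := k₂)
  obtain ⟨C, hC⟩ := le_lintegral_lintegral_exp_neg (L := 1 / 2) (L' := π / 2) hk₁ hk₂
    (by positivity) (by positivity)
  refine ⟨12 ^ |-(k₁ + k₂)| * (C * (C₁ * C₂)), fun τ hτ q hq => ?_⟩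
  have hx : 0 ≤ τ * q := mul_nonneg hτ.1 hq
  have hscale : (1 + τ * q) ^ (-(k₁ + k₂)) ≤
      (12 ^ |-(k₁ + k₂)| : ℝ≥0) * (1 + 12 * τ * q) ^ (-(k₁ + k₂)) := by
    simpa using rpow_le_rpow_abs_mul_rpow (C := 12) (by positivity) (by linarith) (by linarith)
      (by linarith) _
  refine le_coe_mul_trans (ofReal_le_coe_mul_ofReal hscale) (le_coe_mul_trans
    (hC (12 * τ * q) (by linarith)) (lintegral_lintegral_le_coe_mul h₁ h₂ ?_))
  refine ae_powerMeasure_mem.mono fun a ha => ae_powerMeasure_mem.mono fun φ hφ => ?_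
  rw [one_mul]
  exact ENNReal.ofReal_le_ofReal
    (exp_le_normBase_cos_rpow hτ ⟨ha.1.le, by linarith [ha.2]⟩ (Ioc_subset_Icc_self hφ) hq)

end HalfAngle

section Antipodal

/-- The quantity `exp (-t) * sinh t`, the parameter of `normBase` for Koornwinder's integrand. -/
noncomputable def tau (t : ℝ) : ℝ := (1 - exp (-2 * t)) / 2

variable {k₁ k₂ a l t : ℝ}

theorem one_sub_two_mul_tau (t : ℝ) : 1 - 2 * tau t = exp (-2 * t) := by
  unfold tau
  ring

theorem tau_mem_Ico (ht : 0 ≤ t) : tau t ∈ Ico 0 (1 / 2) := by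
  have hle : exp (-2 * t) ≤ 1 := exp_le_one_iff.2 (by linarith)
  exact ⟨by linarith [one_sub_two_mul_tau t], by linarith [one_sub_two_mul_tau t, exp_pos (-2 * t)]⟩

theorem normBase_neg_cos_rpow_le (ht : 0 ≤ t) (hl : 0 ≤ l) (hρ : l ≤ k₁ + 2 * k₂)
    (ha : a ∈ Icc 0 1) {φ : ℝ} (hφ : φ ∈ Icc 0 (π / 2)) :
    normBase (tau t) a (-cos φ) ^ ((l - (k₁ + 2 * k₂)) / 2) ≤
      32 ^ (k₁ + 2 * k₂) * (exp (-2 * t) + a + φ) ^ (-(2 * k₂ + (k₁ - l))) := by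
  have hX : 0 < exp (-2 * t) + a + φ := by linarith [exp_pos (-2 * t), ha.1, hφ.1]
  have hbase := sq_le_normBase_neg_cos (tau_mem_Ico ht) ha hφ
  rw [one_sub_two_mul_tau] at hbase
  calc normBase (tau t) a (-cos φ) ^ ((l - (k₁ + 2 * k₂)) / 2)
      ≤ (((exp (-2 * t) + a + φ) / 32) ^ 2) ^ ((l - (k₁ + 2 * k₂)) / 2) :=
        rpow_le_rpow_of_nonpos (by positivity) hbase (by linarith)
    _ = 32 ^ (k₁ + 2 * k₂ - l) * (exp (-2 * t) + a + φ) ^ (-(2 * k₂ + (k₁ - l))) := by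
        rw [← rpow_natCast, ← rpow_mul (by positivity), div_rpow hX.le (by norm_num),
          div_eq_mul_inv, ← rpow_neg (by norm_num), mul_comm]
        congr 2 <;> push_cast <;> ring
    _ ≤ _ := by
        gcongr
        · norm_num
        · linarith

theorem lintegral_lintegral_add_rpow_neg_le (hk₁ : 0 < k₁) (hk₂ : 0 < k₂) (L : ℝ) :
    ∃ C : ℝ≥0, ∀ t l : ℝ, 0 ≤ t → 0 ≤ l → l ≤ k₁ / 2 →
      ∫⁻ a, ∫⁻ φ, ENNReal.ofReal ((exp (-2 * t) + a + φ) ^ (-(2 * k₂ + (k₁ - l))))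
        ∂powerMeasure (2 * k₂) L ∂powerMeasure k₁ 1 ≤
      C * ENNReal.ofReal ((1 + t) / (1 + l * t)) := by
  refine ⟨(1 / (2 * k₂) + 2 / k₁).toNNReal * (1 / k₁ + 3).toNNReal, fun t l ht hl hlk => ?_⟩
  have hinner : ∀ a ∈ Ioc (0 : ℝ) 1,
      ∫⁻ φ, ENNReal.ofReal ((exp (-2 * t) + a + φ) ^ (-(2 * k₂ + (k₁ - l))))
        ∂powerMeasure (2 * k₂) L ≤
      (1 / (2 * k₂) + 2 / k₁).toNNReal *
        ENNReal.ofReal ((exp (-2 * t) + a) ^ (-(k₁ - l))) := fun a ha => by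
    have hd : 0 < k₁ - l := by linarith
    have ha0 := ha.1
    have hd' : 1 / (k₁ - l) ≤ 2 / k₁ := by
      rw [div_le_div_iff₀ hd hk₁]
      linarith
    refine (lintegral_add_rpow_neg_le (by positivity) hd (by positivity)).trans
      (ofReal_le_coe_mul_ofReal ?_)
    rw [Real.coe_toNNReal _ (by positivity)]
    gcongr
  calc _ ≤ ∫⁻ a, (1 / (2 * k₂) + 2 / k₁).toNNReal *
        ENNReal.ofReal ((exp (-2 * t) + a) ^ (-(k₁ - l))) ∂powerMeasure k₁ 1 :=
        lintegral_mono_ae (ae_powerMeasure_mem.mono hinner)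
    _ ≤ _ := by
        rw [lintegral_const_mul' _ _ ENNReal.coe_ne_top]
        refine le_coe_mul_trans le_rfl
          ((lintegral_exp_add_rpow_neg_le hk₁ ht hl (by linarith)).trans
            (ofReal_le_coe_mul_ofReal ?_))
        rw [Real.coe_toNNReal _ (by positivity)]

theorem halfAngleIntegral_neg_one_le_of_le_half (hk₁ : 0 < k₁) (hk₂ : 0 < k₂) :
    ∃ C : ℝ≥0, ∀ t l : ℝ, 0 ≤ t → 0 ≤ l → l ≤ k₁ / 2 →
      halfAngleIntegral k₁ k₂ ((l - (k₁ + 2 * k₂)) / 2) (tau t) (-1) ≤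
        C * ENNReal.ofReal ((1 + t) / (1 + l * t)) := by
  obtain ⟨C₁, h₁⟩ := radialMeasure_le_smul_powerMeasure (k₁ := k₁) hk₂.le
  obtain ⟨C₂, h₂⟩ := angularMeasure_le_smul_powerMeasure (k₂ := k₂)
  obtain ⟨C, hC⟩ := lintegral_lintegral_add_rpow_neg_le hk₁ hk₂ (π / 2)
  refine ⟨C₁ * C₂ * (32 ^ (k₁ + 2 * k₂) * C), fun t l ht hl hlk => ?_⟩
  refine le_coe_mul_trans (lintegral_lintegral_le_coe_mul h₁ h₂ (F := fun a φ =>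
    (32 ^ (k₁ + 2 * k₂) : ℝ≥0) *
      ENNReal.ofReal ((exp (-2 * t) + a + φ) ^ (-(2 * k₂ + (k₁ - l))))) ?_) ?_
  · refine ae_radialMeasure_mem.mono fun a ha => ae_angularMeasure_mem.mono fun φ hφ => ?_
    rw [neg_one_mul]
    refine ofReal_le_coe_mul_ofReal ?_
    simpa using normBase_neg_cos_rpow_le ht hl (by linarith) ha hφ
  · simp only [lintegral_const_mul' _ _ ENNReal.coe_ne_top]
    exact le_coe_mul_trans le_rfl (hC t l ht hl hlk)

theorem halfAngleIntegral_neg_one_le_div (hk₁ : 0 < k₁) (hk₂ : 0 < k₂) :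
    ∃ C : ℝ≥0, ∀ t l : ℝ, 0 ≤ t → 0 ≤ l → l ≤ k₁ + 2 * k₂ →
      halfAngleIntegral k₁ k₂ ((l - (k₁ + 2 * k₂)) / 2) (tau t) (-1) ≤
        C * ENNReal.ofReal ((1 + t) / (1 + l * t)) := by
  obtain ⟨C, hC⟩ := halfAngleIntegral_neg_one_le_of_le_half hk₁ hk₂
  set ρ := k₁ + 2 * k₂
  refine ⟨C * ⟨2 * ρ / k₁, by positivity⟩, fun t l ht hl hlρ => ?_⟩
  set l' := min l (k₁ / 2) with hl'
  have hl'0 : 0 ≤ l' := le_min hl (by positivity)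
  have hratio : 1 ≤ 2 * ρ / k₁ := by rw [one_le_div hk₁]; linarith
  have hll' : l ≤ 2 * ρ / k₁ * l' := by
    rcases min_cases l (k₁ / 2) with ⟨h, -⟩ | ⟨h, -⟩ <;> rw [hl', h]
    · exact le_mul_of_one_le_left hl hratio
    · field_simp
      exact hlρ
  have hdiv : (1 + t) / (1 + l' * t) ≤ 2 * ρ / k₁ * ((1 + t) / (1 + l * t)) := by
    rw [mul_div_assoc', div_le_div_iff₀ (by positivity) (by positivity)]
    nlinarith [mul_le_mul_of_nonneg_right hll' ht, hratio]
  refine (halfAngleIntegral_anti (q := (l' - ρ) / 2) (tau_mem_Ico ht) (by norm_num) ?_).trans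
    (le_coe_mul_trans (hC t l' ht hl'0 (min_le_right _ _)) (ofReal_le_coe_mul_ofReal hdiv))
  linarith [min_le_left l (k₁ / 2)]

theorem rpow_le_lintegral_normBase_neg_cos (hk₂ : 0 < k₂) :
    ∃ C : ℝ≥0, ∀ t l a : ℝ, 0 ≤ t → 0 ≤ l → l ≤ k₁ + 2 * k₂ → a ∈ Ioc (exp (-2 * t)) 1 →
      ENNReal.ofReal (a ^ (l - k₁)) ≤ C * ∫⁻ φ, ENNReal.ofReal
        (normBase (tau t) a (-1 * cos φ) ^ ((l - (k₁ + 2 * k₂)) / 2)) ∂angularMeasure k₂ := by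
  obtain ⟨C₂, h₂⟩ := powerMeasure_le_smul_angularMeasure (k₂ := k₂)
  refine ⟨(2 ^ (k₁ + 2 * k₂) * (2 * k₂)).toNNReal * C₂, fun t l a ht hl hlρ ha => ?_⟩
  have ha0 : 0 < a := (exp_pos _).trans ha.1
  have hpoint : ∀ φ ∈ Ioc 0 a, ENNReal.ofReal ((2 * a) ^ (l - (k₁ + 2 * k₂))) ≤ ENNReal.ofReal
      (normBase (tau t) a (-1 * cos φ) ^ ((l - (k₁ + 2 * k₂)) / 2)) := fun φ hφ => by
    have hbase : normBase (tau t) a (-cos φ) ≤ (2 * a) ^ 2 :=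
      normBase_neg_cos_le (tau_mem_Ico ht) ha.2 (by rw [one_sub_two_mul_tau]; exact ha.1.le)
        (Ioc_subset_Icc_self hφ)
    have hpos := normBase_pos (tau_mem_Ico ht) ⟨ha0.le, ha.2⟩ (neg_le_neg (cos_le_one φ))
    rw [neg_one_mul]
    refine ENNReal.ofReal_le_ofReal (le_trans (le_of_eq ?_)
      (rpow_le_rpow_of_nonpos hpos hbase (by linarith)))
    rw [← rpow_natCast, ← rpow_mul (by positivity)]
    congr 1
    push_cast
    ring
  have hmass := mul_rpow_div_le_lintegral_powerMeasure (s := 2 * k₂) (L := π / 2) (by positivity)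
    ha0.le (by linarith [ha.2, pi_gt_three]) hpoint
  have hscale : a ^ (l - k₁) ≤ 2 ^ (k₁ + 2 * k₂) * (2 * k₂) *
      ((2 * a) ^ (l - (k₁ + 2 * k₂)) * (a ^ (2 * k₂) / (2 * k₂))) := by
    calc a ^ (l - k₁) ≤ 2 ^ l * a ^ (l - k₁) :=
          le_mul_of_one_le_left (by positivity) (one_le_rpow one_le_two hl)
      _ = 2 ^ (k₁ + 2 * k₂ + (l - (k₁ + 2 * k₂))) * a ^ (l - (k₁ + 2 * k₂) + 2 * k₂) := by ring_nf
      _ = _ := by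
          rw [rpow_add two_pos, rpow_add ha0, mul_rpow two_pos.le ha0.le]
          field_simp
  refine le_coe_mul_trans (ofReal_le_coe_mul_ofReal (y := (2 * a) ^ (l - (k₁ + 2 * k₂)) *
    (a ^ (2 * k₂) / (2 * k₂))) ?_) ?_
  · rwa [Real.coe_toNNReal _ (by positivity)]
  · rw [ENNReal.ofReal_mul (by positivity)]
    refine hmass.trans ((lintegral_mono' h₂ le_rfl).trans_eq ?_)
    rw [lintegral_smul_measure, ENNReal.smul_def, smul_eq_mul]

theorem div_le_halfAngleIntegral_neg_one (hk₂ : 0 < k₂) :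
    ∃ C : ℝ≥0, ∀ t l : ℝ, 1 ≤ t → 0 ≤ l → l ≤ 1 → l ≤ k₁ + 2 * k₂ →
      ENNReal.ofReal ((1 + t) / (1 + l * t)) ≤
        C * halfAngleIntegral k₁ k₂ ((l - (k₁ + 2 * k₂)) / 2) (tau t) (-1) := by
  obtain ⟨C₁, h₁⟩ := powerMeasure_le_smul_radialMeasure (k₁ := k₁) hk₂.le
  obtain ⟨C, hC⟩ := rpow_le_lintegral_normBase_neg_cos (k₁ := k₁) hk₂
  refine ⟨(4 * exp 2).toNNReal * (C * C₁), fun t l ht hl hl1 hlρ => ?_⟩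
  have hradial : ∫⁻ a in Ioc (exp (-2 * t)) (1 / 2), ENNReal.ofReal (a ^ (l - 1)) ≤
      ∫⁻ a, C * ∫⁻ φ, ENNReal.ofReal (normBase (tau t) a (-1 * cos φ) ^
        ((l - (k₁ + 2 * k₂)) / 2)) ∂angularMeasure k₂ ∂powerMeasure k₁ (1 / 2) := by
    rw [lintegral_powerMeasure]
    refine (setLIntegral_mono' measurableSet_Ioc fun a ha => ?_).trans
      (lintegral_mono_set (Ioc_subset_Ioc_left (exp_pos _).le))
    have ha0 : 0 < a := (exp_pos _).trans ha.1
    rw [show l - 1 = (k₁ - 1) + (l - k₁) by ring, rpow_add ha0, ENNReal.ofReal_mul (by positivity)]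
    gcongr
    exact hC t l a (by linarith) hl hlρ ⟨ha.1, by linarith [ha.2]⟩
  refine le_coe_mul_trans (le_setLIntegral_Ioc_rpow_sub_one ht hl hl1) (hradial.trans ?_)
  rw [lintegral_const_mul' _ _ ENNReal.coe_ne_top, ENNReal.coe_mul, mul_assoc]
  gcongr
  refine (lintegral_mono' h₁ le_rfl).trans_eq ?_
  rw [lintegral_smul_measure, ENNReal.smul_def, smul_eq_mul]
  rfl

end Antipodal

section Koornwinder

theorem integral_integral_eq_toReal_lintegral {α β : Type*} [MeasurableSpace α]
    [MeasurableSpace β] {μ : Measure α} {ν : Measure β} [SFinite ν] {f : α → β → ℝ}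
    (hf : Measurable (Function.uncurry f)) (hf0 : ∀ᵐ x ∂μ, ∀ᵐ y ∂ν, 0 ≤ f x y)
    (hfin : ∫⁻ x, ∫⁻ y, ENNReal.ofReal (f x y) ∂ν ∂μ ≠ ∞) :
    ∫ x, ∫ y, f x y ∂ν ∂μ = (∫⁻ x, ∫⁻ y, ENNReal.ofReal (f x y) ∂ν ∂μ).toReal := by
  have hmeas : Measurable fun x => ∫⁻ y, ENNReal.ofReal (f x y) ∂ν :=
    Measurable.lintegral_prod_right hf.ennreal_ofReal
  rw [← integral_toReal hmeas.aemeasurable (ae_lt_top hmeas hfin)]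
  exact integral_congr_ae (hf0.mono fun x hx => integral_eq_lintegral_of_nonneg_ae hx
    (hf.comp measurable_prodMk_left).aestronglyMeasurable)

theorem setLIntegral_Ioc_comp_sub_left (f : ℝ → ℝ≥0∞) (a b c : ℝ) :
    ∫⁻ x in Ioc a b, f (c - x) = ∫⁻ x in Ioc (c - b) (c - a), f x := by
  have hemb : MeasurableEmbedding fun x : ℝ => c - x :=
    (Homeomorph.subLeft c).measurableEmbedding
  rw [← (Measure.measurePreserving_sub_left volume c).setLIntegral_comp_preimage_emb hemb,
    preimage_const_sub_Ioc]
  simp only [sub_sub_cancel]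
  exact setLIntegral_congr (Ico_ae_eq_Icc.trans Ioc_ae_eq_Icc.symm)

variable {k₁ k₂ t : ℝ}

theorem lintegral_angularMeasure_add_reflection (g : ℝ → ℝ≥0∞) :
    ∫⁻ φ in Ioc 0 π, ENNReal.ofReal (sin φ ^ (2 * k₂ - 1)) * g (cos φ) =
      ∫⁻ φ, g (1 * cos φ) ∂angularMeasure k₂ + ∫⁻ φ, g (-1 * cos φ) ∂angularMeasure k₂ := by
  have hreflect := setLIntegral_Ioc_comp_sub_left
    (fun φ => ENNReal.ofReal (sin φ ^ (2 * k₂ - 1)) * g (cos φ)) 0 (π / 2) π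
  simp only [sin_pi_sub, cos_pi_sub, sub_zero, sub_half] at hreflect
  rw [← Ioc_union_Ioc_eq_Ioc (b := π / 2) (by positivity) (by linarith [pi_pos]),
    lintegral_union measurableSet_Ioc (Ioc_disjoint_Ioc_of_le le_rfl), ← hreflect]
  simp only [angularMeasure, one_mul, neg_one_mul]
  rw [lintegral_weightedMeasure (by fun_prop), lintegral_weightedMeasure (by fun_prop)]

theorem lintegral_radialMeasure_one_sub (g : ℝ → ℝ≥0∞) :
    ∫⁻ r in Ioc 0 1, ENNReal.ofReal ((1 - r ^ 2) ^ (k₁ - 1) * r ^ (2 * k₂)) * g (1 - r) =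
      ∫⁻ a, g a ∂radialMeasure k₁ k₂ := by
  have hreflect := setLIntegral_Ioc_comp_sub_left (fun a =>
    ENNReal.ofReal ((1 - (1 - a) ^ 2) ^ (k₁ - 1) * (1 - a) ^ (2 * k₂)) * g a) 0 1 1
  simp only [sub_sub_cancel, sub_self, sub_zero] at hreflect
  rw [hreflect, radialMeasure, lintegral_weightedMeasure (by fun_prop)]

theorem cosh_sq_add_eq_exp_mul_normBase (t r c : ℝ) :
    cosh t ^ 2 + 2 * r * c * sinh t * cosh t + r ^ 2 * sinh t ^ 2 =
      exp (2 * t) * normBase (tau t) (1 - r) c := by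
  have hsq : exp (2 * t) = exp t * exp t := by rw [← exp_add, two_mul]
  have hcosh : cosh t = exp t * (1 - tau t) := by
    rw [cosh_eq, tau, neg_mul, exp_neg (2 * t), hsq, exp_neg]
    field_simp
    ring
  have hsinh : sinh t = exp t * tau t := by
    rw [sinh_eq, tau, neg_mul, exp_neg (2 * t), hsq, exp_neg]
    field_simp
  rw [hcosh, hsinh, hsq, normBase]
  ring

/-- Koornwinder's integral divided by `exp ((l - (k₁ + 2 * k₂)) * t)`, which is what remains after
normalizing the base of the integrand. -/
noncomputable def normalizedIntegral (k₁ k₂ l t : ℝ) : ℝ≥0∞ :=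
  halfAngleIntegral k₁ k₂ ((l - (k₁ + 2 * k₂)) / 2) (tau t) 1 +
    halfAngleIntegral k₁ k₂ ((l - (k₁ + 2 * k₂)) / 2) (tau t) (-1)

theorem koornwinder_integrand_eq (ht : 0 ≤ t) (l : ℝ) {r φ : ℝ} (hr : r ∈ Icc 0 1) :
    (cosh t ^ 2 + 2 * r * cos φ * sinh t * cosh t + r ^ 2 * sinh t ^ 2) ^
          ((l - (k₁ + 2 * k₂)) / 2) *
        (1 - r ^ 2) ^ (k₁ - 1) * r ^ (2 * k₂) * sin φ ^ (2 * k₂ - 1) =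
      exp ((l - (k₁ + 2 * k₂)) * t) * ((1 - r ^ 2) ^ (k₁ - 1) * r ^ (2 * k₂) *
        (sin φ ^ (2 * k₂ - 1) *
          normBase (tau t) (1 - r) (cos φ) ^ ((l - (k₁ + 2 * k₂)) / 2))) := by
  have hbase : 0 < normBase (tau t) (1 - r) (cos φ) :=
    normBase_pos (tau_mem_Ico ht) ⟨by linarith [hr.2], by linarith [hr.1]⟩ (neg_one_le_cos φ)
  rw [cosh_sq_add_eq_exp_mul_normBase, mul_rpow (exp_pos _).le hbase.le, ← exp_mul]
  ring_nf

instance : SFinite (angularMeasure k₂) :=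
  inferInstanceAs (SFinite (Measure.withDensity _ _))

theorem measurable_lintegral_normBase (k₂ q τ σ : ℝ) : Measurable fun a =>
    ∫⁻ φ, ENNReal.ofReal (normBase τ a (σ * cos φ) ^ q) ∂angularMeasure k₂ := by
  refine Measurable.lintegral_prod_right ?_
  unfold normBase
  fun_prop

theorem lintegral_koornwinder_eq (ht : 0 ≤ t) (l : ℝ) :
    ∫⁻ r in Ioc 0 1, ∫⁻ φ in Ioc 0 π, ENNReal.ofReal
        ((cosh t ^ 2 + 2 * r * cos φ * sinh t * cosh t + r ^ 2 * sinh t ^ 2) ^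
          ((l - (k₁ + 2 * k₂)) / 2) *
        (1 - r ^ 2) ^ (k₁ - 1) * r ^ (2 * k₂) * sin φ ^ (2 * k₂ - 1)) =
      ENNReal.ofReal (exp ((l - (k₁ + 2 * k₂)) * t)) * normalizedIntegral k₁ k₂ l t := by
  unfold normalizedIntegral halfAngleIntegral
  rw [← lintegral_add_left (measurable_lintegral_normBase _ _ _ _),
    ← lintegral_radialMeasure_one_sub, ← lintegral_const_mul' _ _ ENNReal.ofReal_ne_top]
  refine setLIntegral_congr_fun measurableSet_Ioc fun r hr => ?_
  have hweight : 0 ≤ (1 - r ^ 2) ^ (k₁ - 1) * r ^ (2 * k₂) :=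
    mul_nonneg (rpow_nonneg (by nlinarith [hr.1, hr.2]) _) (rpow_nonneg hr.1.le _)
  rw [← lintegral_angularMeasure_add_reflection fun c => ENNReal.ofReal
      (normBase (tau t) (1 - r) c ^ ((l - (k₁ + 2 * k₂)) / 2)),
    ← lintegral_const_mul' _ _ ENNReal.ofReal_ne_top,
    ← lintegral_const_mul' _ _ ENNReal.ofReal_ne_top]
  refine setLIntegral_congr_fun measurableSet_Ioc fun φ hφ => ?_
  have hsin : 0 ≤ sin φ := sin_nonneg_of_nonneg_of_le_pi hφ.1.le hφ.2
  rw [koornwinder_integrand_eq ht l (Ioc_subset_Icc_self hr), ENNReal.ofReal_mul (exp_pos _).le,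
    ENNReal.ofReal_mul hweight, ENNReal.ofReal_mul (rpow_nonneg hsin _)]

theorem bcIntegral_eq_toReal (ht : 0 ≤ t) (l : ℝ)
    (hfin : normalizedIntegral k₁ k₂ l t ≠ ∞) :
    bcIntegral k₁ k₂ l t =
      exp ((l - (k₁ + 2 * k₂)) * t) * (normalizedIntegral k₁ k₂ l t).toReal := by
  have hlint := lintegral_koornwinder_eq (k₁ := k₁) (k₂ := k₂) ht l
  simp only [bcIntegral, intervalIntegral.integral_of_le zero_le_one,
    intervalIntegral.integral_of_le pi_pos.le]
  rw [integral_integral_eq_toReal_lintegral, hlint, ENNReal.toReal_mul,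
    ENNReal.toReal_ofReal (exp_pos _).le]
  · unfold Function.uncurry
    fun_prop
  · filter_upwards [ae_restrict_mem measurableSet_Ioc] with r hr
    filter_upwards [ae_restrict_mem measurableSet_Ioc] with φ hφ
    have hbase := normBase_pos (tau_mem_Ico ht) (a := 1 - r)
      ⟨by linarith [hr.2], by linarith [hr.1]⟩ (neg_one_le_cos φ)
    have hsin : 0 ≤ sin φ := sin_nonneg_of_nonneg_of_le_pi hφ.1.le hφ.2
    have hr2 : 0 ≤ 1 - r ^ 2 := by nlinarith [hr.1, hr.2]
    have hr0 := hr.1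
    rw [koornwinder_integrand_eq ht l (Ioc_subset_Icc_self hr)]
    positivity
  · rw [hlint]
    exact ENNReal.mul_ne_top ENNReal.ofReal_ne_top hfin

end Koornwinder

section SharpFactor

/-- The factor multiplying `exp ((l - (k₁ + 2 * k₂)) * t)` in the sharp estimate, with
`k = k₁ + k₂`. -/
noncomputable def sharpFactor (k l t : ℝ) : ℝ :=
  (1 + t) / (1 + l * t) ^ k * ((1 + l * (1 + t)) / (1 + l)) ^ (k - 1)

variable {k l t m M : ℝ}

theorem tau_le (t : ℝ) : tau t ≤ t := by
  linarith [one_sub_two_mul_tau t, add_one_le_exp (-2 * t)]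

theorem le_tau_mul (t : ℝ) : t ≤ tau t * (1 + 2 * t) := by
  have hexp : exp (-2 * t) * (1 + 2 * t) ≤ 1 := by
    rw [neg_mul, exp_neg, inv_mul_le_one₀ (exp_pos _)]
    linarith [add_one_le_exp (2 * t)]
  rw [← one_sub_two_mul_tau] at hexp
  linarith

theorem sharpFactor_eq_mul_rpow (hl : 0 ≤ l) (ht : 0 ≤ t) :
    sharpFactor k l t = (1 + t) / (1 + l * t) *
      ((1 + l * (1 + t)) / ((1 + l) * (1 + l * t))) ^ (k - 1) := by
  have hpow : (1 + l * t) ^ k = (1 + l * t) ^ (k - 1) * (1 + l * t) := by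
    rw [← rpow_add_one (by positivity), sub_add_cancel]
  rw [sharpFactor, ← div_div _ (1 + l), div_rpow _ (by positivity : 0 ≤ 1 + l * t) (k - 1), hpow]
  · field_simp
  · positivity

theorem sharpFactor_comparable_div (hl : 0 ≤ l) (ht : 0 ≤ t) (hM : l ≤ M) :
    sharpFactor k l t ≤ (1 + M) ^ |k - 1| * ((1 + t) / (1 + l * t)) ∧
      (1 + t) / (1 + l * t) ≤ (1 + M) ^ |k - 1| * sharpFactor k l t := by
  rw [sharpFactor_eq_mul_rpow hl ht]
  set z := (1 + l * (1 + t)) / ((1 + l) * (1 + l * t)) with hz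
  have hz0 : 0 < z := by positivity
  have hz1 : z ≤ 1 := by
    rw [hz, div_le_one (by positivity)]
    nlinarith [mul_nonneg (mul_nonneg hl hl) ht]
  have hzM : 1 ≤ (1 + M) * z := by
    rw [hz, mul_div_assoc', one_le_div (by positivity)]
    exact mul_le_mul (by linarith) (by linarith) (by positivity) (by linarith)
  have hupper := rpow_le_rpow_abs_mul_rpow (C := 1 + M) hz0 one_pos (by linarith) hzM (k - 1)
  have hlower := rpow_le_rpow_abs_mul_rpow (C := 1 + M) one_pos hz0 hzM (by linarith) (k - 1)
  rw [one_rpow] at hupper hlower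
  have hP : 0 ≤ (1 + t) / (1 + l * t) := by positivity
  constructor <;> nlinarith

theorem sharpFactor_comparable_div_rpow (hm : 0 < m) (hm1 : m ≤ 1) (hl : 0 ≤ l) (ht : 0 ≤ t)
    (h : m ≤ l ∨ t ≤ 1) :
    sharpFactor k l t ≤ (1 + 1 / m) ^ |k - 1| * ((1 + t) / (1 + l * t)) ^ k ∧
      ((1 + t) / (1 + l * t)) ^ k ≤ (1 + 1 / m) ^ |k - 1| * sharpFactor k l t := by
  rw [sharpFactor_eq_mul_rpow hl ht]
  set P := (1 + t) / (1 + l * t) with hP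
  set z := (1 + l * (1 + t)) / ((1 + l) * (1 + l * t)) with hz
  have hP0 : 0 < P := by positivity
  have hz0 : 0 < z := by positivity
  have hzP : z ≤ P := by
    rw [hz, hP, div_le_div_iff₀ (by positivity) (by positivity)]
    nlinarith [mul_nonneg hl ht, mul_nonneg ht (mul_nonneg hl ht)]
  have hPz : P ≤ (1 + 1 / m) * z := by
    have ht' : t ≤ 1 / m * (1 + l * (1 + t)) := by
      rw [one_div, le_inv_mul_iff₀ hm]
      rcases h with h | h <;> nlinarith [mul_nonneg hl ht]
    rw [hz, hP, mul_div_assoc', div_le_div_iff₀ (by positivity) (by positivity)]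
    have hden : 0 < 1 + l * t := by positivity
    nlinarith
  have hmul : P ^ k = P * P ^ (k - 1) := by
    rw [mul_comm, ← rpow_add_one hP0.ne', sub_add_cancel]
  have hC : 1 ≤ 1 + 1 / m := by linarith [one_div_pos.2 hm]
  have hupper := rpow_le_rpow_abs_mul_rpow (C := 1 + 1 / m) hz0 hP0 (by nlinarith) hPz (k - 1)
  have hlower := rpow_le_rpow_abs_mul_rpow (C := 1 + 1 / m) hP0 hz0 hPz (by nlinarith) (k - 1)
  rw [hmul]
  constructor <;> nlinarith

theorem div_rpow_comparable_one_add_mul_tau_rpow (hm : 0 < m) (hm1 : m ≤ 1) (hl : 0 ≤ l)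
    (ht : 0 ≤ t) (h : m ≤ l ∨ t ≤ 1) :
    ((1 + t) / (1 + l * t)) ^ k ≤ (2 + 1 / m) ^ |k| * (1 + l * tau t) ^ (-k) ∧
      (1 + l * tau t) ^ (-k) ≤ (2 + 1 / m) ^ |k| * ((1 + t) / (1 + l * t)) ^ k := by
  have hτ := tau_mem_Ico ht
  have hτ0 := hτ.1
  have hτt := mul_le_mul_of_nonneg_left (tau_le t) hl
  have hpos : 0 < 1 + l * tau t := by positivity
  have hP : (1 + t) / (1 + l * t) ≤ (2 + 1 / m) * (1 + l * tau t)⁻¹ := by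
    have ht' : t ≤ 1 / m * (1 + l * t) := by
      rw [one_div, le_inv_mul_iff₀ hm]
      rcases h with h | h <;> nlinarith [mul_nonneg hl ht]
    rw [← div_eq_mul_inv, div_le_div_iff₀ (by positivity) hpos]
    nlinarith [mul_le_mul_of_nonneg_left hτ.2.le (mul_nonneg hl ht)]
  have hinv : (1 + l * tau t)⁻¹ ≤ (2 + 1 / m) * ((1 + t) / (1 + l * t)) := by
    have htwo : (1 + l * tau t)⁻¹ ≤ 2 * ((1 + t) / (1 + l * t)) := by
      rw [mul_div_assoc', inv_le_iff_one_le_mul₀ hpos, div_mul_eq_mul_div,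
        one_le_div (by positivity)]
      nlinarith [mul_le_mul_of_nonneg_left (le_tau_mul t) hl]
    exact htwo.trans (by gcongr; linarith [one_div_pos.2 hm])
  rw [rpow_neg hpos.le, ← inv_rpow hpos.le]
  exact ⟨rpow_le_rpow_abs_mul_rpow (by positivity) (by positivity) hP hinv k,
    rpow_le_rpow_abs_mul_rpow (by positivity) (by positivity) hinv hP k⟩

theorem sharpFactor_comparable_one_add_mul_tau_rpow (hm : 0 < m) (hm1 : m ≤ 1) (hl : 0 ≤ l)
    (ht : 0 ≤ t) (h : m ≤ l ∨ t ≤ 1) :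
    sharpFactor k l t ≤ (1 + 1 / m) ^ |k - 1| * (2 + 1 / m) ^ |k| * (1 + l * tau t) ^ (-k) ∧
      (1 + l * tau t) ^ (-k) ≤
        (1 + 1 / m) ^ |k - 1| * (2 + 1 / m) ^ |k| * sharpFactor k l t := by
  obtain ⟨hle, hge⟩ := sharpFactor_comparable_div_rpow (k := k) hm hm1 hl ht h
  obtain ⟨hle', hge'⟩ := div_rpow_comparable_one_add_mul_tau_rpow (k := k) hm hm1 hl ht h
  constructor
  · rw [mul_assoc]
    exact hle.trans (by gcongr)
  · rw [mul_comm ((1 + 1 / m) ^ |k - 1|), mul_assoc]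
    exact hge'.trans (by gcongr)

end SharpFactor

section SharpEstimate

variable {k₁ k₂ : ℝ}

theorem normalizedIntegral_le_sharpFactor_of_le (hk₁ : 0 < k₁) (hk₂ : 0 < k₂) :
    ∃ C : ℝ≥0, ∀ l t : ℝ, 0 ≤ l → 0 ≤ t → l ≤ k₁ + 2 * k₂ →
      normalizedIntegral k₁ k₂ l t ≤ C * ENNReal.ofReal (sharpFactor (k₁ + k₂) l t) := by
  obtain ⟨C, hC⟩ := halfAngleIntegral_neg_one_le_div hk₁ hk₂
  refine ⟨2 * C * ((1 + (k₁ + 2 * k₂)) ^ |k₁ + k₂ - 1|).toNNReal, fun l t hl ht hlρ => ?_⟩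
  have hsum : normalizedIntegral k₁ k₂ l t ≤
      (2 : ℝ≥0) * halfAngleIntegral k₁ k₂ ((l - (k₁ + 2 * k₂)) / 2) (tau t) (-1) := by
    rw [normalizedIntegral, ENNReal.coe_ofNat, two_mul (halfAngleIntegral _ _ _ _ _)]
    gcongr
    exact halfAngleIntegral_one_le (tau_mem_Ico ht) (by linarith)
  refine le_coe_mul_trans (le_coe_mul_trans hsum (hC t l ht hl hlρ)) (ofReal_le_coe_mul_ofReal ?_)
  rw [Real.coe_toNNReal _ (by positivity)]
  exact (sharpFactor_comparable_div hl ht hlρ).2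

theorem one_add_mul_half_sub_rpow_le {τ ρ l : ℝ} (hτ : τ ∈ Icc 0 1) (hρ : 0 ≤ ρ) (hl : ρ ≤ l)
    (m : ℝ) : (1 + τ * ((l - ρ) / 2)) ^ m ≤ (2 + ρ) ^ |m| * (1 + τ * l) ^ m := by
  have hτρ : τ * ρ ≤ ρ := mul_le_of_le_one_left hρ hτ.2
  have hτρ0 : 0 ≤ τ * ρ := mul_nonneg hτ.1 hρ
  have hsub : 0 ≤ τ * (l - ρ) := mul_nonneg hτ.1 (by linarith)
  have hρsub : 0 ≤ ρ * (τ * (l - ρ)) := mul_nonneg hρ hsub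
  have hρl : 0 ≤ ρ * (τ * l) := mul_nonneg hρ (by linarith)
  exact rpow_le_rpow_abs_mul_rpow (by linarith) (by linarith) (by linarith) (by linarith) m

theorem normalizedIntegral_le_sharpFactor_of_ge (hk₁ : 0 < k₁) (hk₂ : 0 < k₂) :
    ∃ C : ℝ≥0, ∀ l t : ℝ, 0 ≤ t → k₁ + 2 * k₂ ≤ l →
      normalizedIntegral k₁ k₂ l t ≤ C * ENNReal.ofReal (sharpFactor (k₁ + k₂) l t) := by
  obtain ⟨C, hC⟩ := halfAngleIntegral_one_le_rpow hk₁ hk₂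
  set ρ := k₁ + 2 * k₂
  set k := k₁ + k₂
  set m := min 1 ρ
  have hm : 0 < m := lt_min one_pos (by positivity)
  refine ⟨2 * C * ((2 + ρ) ^ |-k|).toNNReal *
    ((1 + 1 / m) ^ |k - 1| * (2 + 1 / m) ^ |k|).toNNReal, fun l t ht hlρ => ?_⟩
  have hτ := tau_mem_Ico ht
  have hl : 0 ≤ l := le_trans (by positivity) hlρ
  have hsum : normalizedIntegral k₁ k₂ l t ≤
      (2 : ℝ≥0) * halfAngleIntegral k₁ k₂ ((l - ρ) / 2) (tau t) 1 := by
    rw [normalizedIntegral, ENNReal.coe_ofNat, two_mul (halfAngleIntegral _ _ _ _ _)]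
    gcongr
    exact halfAngleIntegral_neg_one_le hτ (by linarith)
  refine le_coe_mul_trans (le_coe_mul_trans (le_coe_mul_trans hsum
    (hC _ hτ _ (by linarith))) (ofReal_le_coe_mul_ofReal ?_)) (ofReal_le_coe_mul_ofReal
      (y := sharpFactor k l t) (x := (1 + l * tau t) ^ (-k)) ?_)
  · rw [Real.coe_toNNReal _ (by positivity), mul_comm l]
    exact one_add_mul_half_sub_rpow_le ⟨hτ.1, by linarith [hτ.2]⟩ (by positivity) hlρ _
  · rw [Real.coe_toNNReal _ (by positivity)]
    exact (sharpFactor_comparable_one_add_mul_tau_rpow hm (min_le_left _ _) hl ht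
      (.inl ((min_le_right _ _).trans hlρ))).2

theorem normalizedIntegral_le_sharpFactor (hk₁ : 0 < k₁) (hk₂ : 0 < k₂) :
    ∃ C : ℝ≥0, ∀ l t : ℝ, 0 ≤ l → 0 ≤ t →
      normalizedIntegral k₁ k₂ l t ≤ C * ENNReal.ofReal (sharpFactor (k₁ + k₂) l t) := by
  obtain ⟨C, hC⟩ := normalizedIntegral_le_sharpFactor_of_le hk₁ hk₂
  obtain ⟨D, hD⟩ := normalizedIntegral_le_sharpFactor_of_ge hk₁ hk₂
  refine ⟨max C D, fun l t hl ht => ?_⟩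
  rcases le_total l (k₁ + 2 * k₂) with hlρ | hlρ
  · exact (hC l t hl ht hlρ).trans (by gcongr; exact le_max_left C D)
  · exact (hD l t ht hlρ).trans (by gcongr; exact le_max_right C D)

theorem sharpFactor_le_normalizedIntegral_of_le_or_le (hk₁ : 0 < k₁) (hk₂ : 0 < k₂) {m : ℝ}
    (hm : 0 < m) (hm1 : m ≤ 1) :
    ∃ C : ℝ≥0, ∀ l t : ℝ, 0 ≤ l → 0 ≤ t → m ≤ l ∨ t ≤ 1 →
      ENNReal.ofReal (sharpFactor (k₁ + k₂) l t) ≤ C * normalizedIntegral k₁ k₂ l t := by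
  obtain ⟨C, hC⟩ := rpow_le_halfAngleIntegral_one hk₁ hk₂
  set k := k₁ + k₂
  refine ⟨((1 + 1 / m) ^ |k - 1| * (2 + 1 / m) ^ |k|).toNNReal * C, fun l t hl ht h => ?_⟩
  have hτ := tau_mem_Ico ht
  have hτ0 := hτ.1
  have hsharp := (sharpFactor_comparable_one_add_mul_tau_rpow (k := k) hm hm1 hl ht h).1
  have hhalf : (1 + l * tau t) ^ (-k) ≤ (1 + tau t * (l / 2)) ^ (-k) :=
    rpow_le_rpow_of_nonpos (by positivity) (by nlinarith [mul_nonneg hl hτ0]) (by linarith)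
  have hanti : halfAngleIntegral k₁ k₂ (l / 2) (tau t) 1 ≤ normalizedIntegral k₁ k₂ l t :=
    (halfAngleIntegral_anti hτ (by norm_num) (by linarith)).trans le_self_add
  refine le_coe_mul_trans (ofReal_le_coe_mul_ofReal ?_)
    (((ENNReal.ofReal_le_ofReal hhalf).trans (hC _ hτ _ (by positivity))).trans (by gcongr))
  rwa [Real.coe_toNNReal _ (by positivity)]

theorem sharpFactor_le_normalizedIntegral_of_le_of_le (hk₂ : 0 < k₂) :
    ∃ C : ℝ≥0, ∀ l t : ℝ, 0 ≤ l → l ≤ 1 → l ≤ k₁ + 2 * k₂ → 1 ≤ t →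
      ENNReal.ofReal (sharpFactor (k₁ + k₂) l t) ≤ C * normalizedIntegral k₁ k₂ l t := by
  obtain ⟨C, hC⟩ := div_le_halfAngleIntegral_neg_one (k₁ := k₁) hk₂
  refine ⟨((1 + 1 : ℝ) ^ |k₁ + k₂ - 1|).toNNReal * C, fun l t hl hl1 hlρ ht => ?_⟩
  refine le_coe_mul_trans (ofReal_le_coe_mul_ofReal ?_)
    ((hC t l ht hl hl1 hlρ).trans (by gcongr; exact le_add_self))
  rw [Real.coe_toNNReal _ (by positivity)]
  exact (sharpFactor_comparable_div hl (by linarith) hl1).1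

theorem sharpFactor_le_normalizedIntegral (hk₁ : 0 < k₁) (hk₂ : 0 < k₂) :
    ∃ C : ℝ≥0, ∀ l t : ℝ, 0 ≤ l → 0 ≤ t →
      ENNReal.ofReal (sharpFactor (k₁ + k₂) l t) ≤ C * normalizedIntegral k₁ k₂ l t := by
  have hm : 0 < min 1 (k₁ + 2 * k₂) := lt_min one_pos (by positivity)
  obtain ⟨C, hC⟩ := sharpFactor_le_normalizedIntegral_of_le_or_le hk₁ hk₂ hm (min_le_left _ _)
  obtain ⟨D, hD⟩ := sharpFactor_le_normalizedIntegral_of_le_of_le (k₁ := k₁) hk₂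
  refine ⟨max C D, fun l t hl ht => ?_⟩
  by_cases h : min 1 (k₁ + 2 * k₂) ≤ l ∨ t ≤ 1
  · exact (hC l t hl ht h).trans (by gcongr; exact le_max_left C D)
  · rw [not_or, not_le, not_le, lt_min_iff] at h
    exact (hD l t hl h.1.1.le h.1.2.le h.2.le).trans (by gcongr; exact le_max_right C D)

theorem exists_bcIntegral_bounds (hk₁ : 0 < k₁) (hk₂ : 0 < k₂) :
    ∃ C D : ℝ≥0, ∀ l t : ℝ, 0 ≤ l → 0 ≤ t →
      exp ((l - (k₁ + 2 * k₂)) * t) * sharpFactor (k₁ + k₂) l t ≤ C * bcIntegral k₁ k₂ l t ∧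
      bcIntegral k₁ k₂ l t ≤
        D * (exp ((l - (k₁ + 2 * k₂)) * t) * sharpFactor (k₁ + k₂) l t) := by
  obtain ⟨C, hC⟩ := sharpFactor_le_normalizedIntegral hk₁ hk₂
  obtain ⟨D, hD⟩ := normalizedIntegral_le_sharpFactor hk₁ hk₂
  refine ⟨C, D, fun l t hl ht => ?_⟩
  have hsharp : 0 ≤ sharpFactor (k₁ + k₂) l t := by
    unfold sharpFactor
    positivity
  have hfin : normalizedIntegral k₁ k₂ l t ≠ ∞ :=
    ne_top_of_le_ne_top (ENNReal.mul_ne_top ENNReal.coe_ne_top ENNReal.ofReal_ne_top) (hD l t hl ht)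
  have hlower := ENNReal.toReal_mono (ENNReal.mul_ne_top ENNReal.coe_ne_top hfin) (hC l t hl ht)
  have hupper := ENNReal.toReal_mono
    (ENNReal.mul_ne_top ENNReal.coe_ne_top ENNReal.ofReal_ne_top) (hD l t hl ht)
  rw [ENNReal.toReal_mul, ENNReal.toReal_ofReal hsharp, ENNReal.coe_toReal] at hlower hupper
  rw [bcIntegral_eq_toReal ht l hfin, mul_left_comm, mul_left_comm (D : ℝ)]
  exact ⟨by gcongr, by gcongr⟩

end SharpEstimate

end HeckmanOpdam

theorem stmt_11 (k₁ k₂ : ℝ) (hk₁ : 0 < k₁) (hk₂ : 0 < k₂) :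
    ∃ C₁ C₂ : ℝ, 0 < C₁ ∧ 0 < C₂ ∧ ∀ l t : ℝ, 0 ≤ l → 0 ≤ t →
      C₁ * (Real.exp ((l - (k₁ + 2 * k₂)) * t) *
          ((1 + t) / (1 + l * t) ^ (k₁ + k₂)) *
          ((1 + l * (1 + t)) / (1 + l)) ^ (k₁ + k₂ - 1)) ≤ bcIntegral k₁ k₂ l t ∧
      bcIntegral k₁ k₂ l t ≤
        C₂ * (Real.exp ((l - (k₁ + 2 * k₂)) * t) *
          ((1 + t) / (1 + l * t) ^ (k₁ + k₂)) *
          ((1 + l * (1 + t)) / (1 + l)) ^ (k₁ + k₂ - 1)) := by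
  obtain ⟨C, D, hCD⟩ := HeckmanOpdam.exists_bcIntegral_bounds hk₁ hk₂
  refine ⟨(C + 1)⁻¹, D + 1, by positivity, by positivity, fun l t hl ht => ?_⟩
  obtain ⟨hlower, hupper⟩ := hCD l t hl ht
  have hB : 0 < Real.exp ((l - (k₁ + 2 * k₂)) * t) * HeckmanOpdam.sharpFactor (k₁ + k₂) l t := by
    unfold HeckmanOpdam.sharpFactor
    positivity
  have hI : 0 < bcIntegral k₁ k₂ l t :=
    pos_of_mul_pos_right (hB.trans_le hlower) C.coe_nonneg
  rw [mul_assoc (Real.exp _), ← HeckmanOpdam.sharpFactor, inv_mul_le_iff₀ (by positivity)]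
  exact ⟨by linarith, by linarith⟩
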